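/- arXiv:2602.24274 — 2 statements merged into one kernel-verified Lean document; each statement's English description precedes it below -/
import Mathlib

section
/- Let (B, A) be a 3-colored digraph where B is a connected bicyclic graph such that every cycle of B, with at most one exception, has weight in {i, −i}, and suppose det A ≠ 0. Then every diagonal entry of A⁻¹ is zero if and only if B has a perfect matching and B does not contain a cycle Γ with |Γ| odd and w(Γ) ∈ {1, −1} that has exactly one peg relative to some perfect matching of B. -/
/-!
Since `det A ≠ 0`, the entry `A⁻¹ v v` vanishes iff the diagonal cofactor at `v` does. Both the
determinant and the cofactors are sums over permutations that move vertices along edges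
(`det_eq_sum`, `adjugate_eq_sum`). Reversing a cycle of weight `±i` conjugates its weight and
hence negates the term, so only the good permutations, none of whose cycles has weight `±i`,
survive (`sum_graphical_eq_sum_good`). As at most one cycle `Γ` of the graph has real weight, a
good permutation is a product of disjoint transpositions along edges, possibly with one of the
two orientations of `Γ`. Good permutations that are not involutions and have the same support
contribute equally (`permTerm_eq_of_not_involutive`), so there is no cancellation among them
(`sum_ne_zero_of_good`).

Suppose the graph has a perfect matching. Then the number of vertices is even, so the good
permutations moving exactly the vertices other than `v` are not involutions: each consists of
`Γ`, which is odd, and a matching of the remaining vertices. Hence the cofactor at `v` is nonzero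
iff `Γ` exists, is odd, and the graph minus `Γ` and `v` has a perfect matching. Following an
alternating path from `v` in the union of this matching with a perfect matching of the whole graph
ends at `Γ` (`exists_exposed_near`), and this turns the existence of such a `v` into the existence
of a perfect matching relative to which `Γ` has exactly one peg (`exists_peg_of_good`,
`exists_good_of_peg`).

Suppose the graph has no perfect matching. As `det A ≠ 0`, some good permutation moves every
vertex; it must contain `Γ`, and `Γ` is odd, since an even cycle could be replaced by alternate
edges. Removing a vertex `x` from `Γ` and matching the rest of `Γ` along its edges gives a good
permutation moving all vertices but `x`, and the cofactor at `x` is nonzero (`hasPM_of_diag`).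
-/

open SimpleGraph

/-- A perfect matching of a simple graph, given as a finite set of edges in which
every vertex lies in exactly one edge. -/
def IsPM {V : Type*} [DecidableEq V] (G : SimpleGraph V) (M : Finset (Sym2 V)) : Prop :=
  (∀ e ∈ M, e ∈ G.edgeSet) ∧ ∀ v : V, (M.filter (fun e => v ∈ e)).card = 1

/-- `G` has a perfect matching. -/
def HasPM {V : Type*} [DecidableEq V] (G : SimpleGraph V) : Prop :=
  ∃ M, IsPM G M

/-- `(G, A)` is a 3-colored digraph: `A` is Hermitian with zero diagonal, entries in
`{1, -1, i, -i}` on edges of `G`, and `0` on non-edges. -/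
def ThreeColored {V : Type*} (G : SimpleGraph V) (A : Matrix V V ℂ) : Prop :=
  A.IsHermitian ∧ (∀ v, A v v = 0) ∧
    (∀ u v, G.Adj u v → A u v ∈ ({1, -1, Complex.I, -Complex.I} : Set ℂ)) ∧
    (∀ u v, u ≠ v → ¬ G.Adj u v → A u v = 0)

/-- The weight of a walk: the product of the entries of `A` along its darts. -/
def walkWeight {V : Type*} {G : SimpleGraph V} (A : Matrix V V ℂ) {u v : V}
    (p : G.Walk u v) : ℂ :=
  (p.darts.map (fun d => A d.toProd.1 d.toProd.2)).prod

/-- A closed walk (e.g. a cycle) `c` is independent in `G` if `G - V(c)` has a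
perfect matching. -/
def IsIndep {V : Type*} [DecidableEq V] (G : SimpleGraph V) {u : V} (c : G.Walk u u) : Prop :=
  HasPM (G.induce {x : V | x ∉ c.support})

/-- The number of perfect matchings of `G`. -/
noncomputable def numPM (V : Type*) [DecidableEq V] (G : SimpleGraph V) : ℕ :=
  {M : Finset (Sym2 V) | IsPM G M}.ncard

/-- A connected graph on `n` vertices is unicyclic if it has exactly `n` edges. -/
def Unicyclic (V : Type*) [Fintype V] (G : SimpleGraph V) : Prop :=
  G.Connected ∧ G.edgeSet.ncard = Fintype.card V

/-- A connected graph on `n` vertices is bicyclic if it has exactly `n + 1` edges. -/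
def Bicyclic (V : Type*) [Fintype V] (G : SimpleGraph V) : Prop :=
  G.Connected ∧ G.edgeSet.ncard = Fintype.card V + 1

/-- Two cycles are regarded as the same cycle when they have the same edge set. -/
def SameCycle {V : Type*} [DecidableEq V] {G : SimpleGraph V} {u v : V}
    (c : G.Walk u u) (d : G.Walk v v) : Prop :=
  c.edges.toFinset = d.edges.toFinset

/-- A bicyclic graph is of ∞-type if its cycles are pairwise edge-disjoint. -/
def InfinityType {V : Type*} [DecidableEq V] (G : SimpleGraph V) : Prop :=
  ∀ (u v : V) (c : G.Walk u u) (d : G.Walk v v), c.IsCycle → d.IsCycle →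
    ¬ SameCycle c d → ∀ e ∈ c.edges, e ∉ d.edges

/-- A bicyclic graph is of θ-type if it is not of ∞-type. -/
def ThetaType {V : Type*} [DecidableEq V] (G : SimpleGraph V) : Prop :=
  ¬ InfinityType G

/-- `e` is a peg on the cycle `c`: either a chord of `c`, or an edge joining a vertex
of `c` to a vertex outside `c`. -/
def IsPeg {V : Type*} {G : SimpleGraph V} {u : V} (c : G.Walk u u) (e : Sym2 V) : Prop :=
  ∃ x y, e = s(x, y) ∧
    ((x ∈ c.support ∧ y ∈ c.support ∧ e ∉ c.edges) ∨ (x ∈ c.support ∧ y ∉ c.support))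

/-- The number of pegs on the cycle `c` relative to the perfect matching `M`. -/
noncomputable def pegCount {V : Type*} {G : SimpleGraph V} {u : V} (c : G.Walk u u)
    (M : Finset (Sym2 V)) : ℕ :=
  {e : Sym2 V | e ∈ M ∧ IsPeg c e}.ncard

/-- A path is mm-alternating relative to `M` if its edges alternately belong to `M`,
beginning and ending with edges of `M`. -/
def MMAlt {V : Type*} {G : SimpleGraph V} (M : Finset (Sym2 V)) {a b : V}
    (p : G.Walk a b) : Prop :=
  p.IsPath ∧ Odd p.length ∧
    ∀ (k : ℕ) (h : k < p.edges.length), (p.edges.get ⟨k, h⟩ ∈ M ↔ Even k)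

/-! ### Permutations supported on edges and their weights -/

/-- Every vertex moved by `σ` is moved along an edge of `G`. -/
def Graphical {V : Type*} (G : SimpleGraph V) (σ : Equiv.Perm V) : Prop :=
  ∀ x, σ x ≠ x → G.Adj x (σ x)

/-- The product of the entries `A x (σ x)` over the vertices moved by `σ`. For a cyclic
permutation this is the weight of the corresponding directed cycle. -/
def permWeight {V : Type*} [Fintype V] [DecidableEq V] (A : Matrix V V ℂ)
    (σ : Equiv.Perm V) : ℂ :=
  ∏ x ∈ σ.support, A x (σ x)

/-- The vertices of the cycles of `σ` whose weight is `±i`. -/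
def badSet {V : Type*} [Fintype V] [DecidableEq V] (A : Matrix V V ℂ)
    (σ : Equiv.Perm V) : Set V :=
  {x | permWeight A (σ.cycleOf x) ∈ ({Complex.I, -Complex.I} : Set ℂ)}

/-- A graphical permutation none of whose cycles has weight `±i`. -/
def Good {V : Type*} [Fintype V] [DecidableEq V] (G : SimpleGraph V) (A : Matrix V V ℂ)
    (σ : Equiv.Perm V) : Prop :=
  Graphical G σ ∧ badSet A σ = ∅

/-- The signed contribution of `σ` to the expansion of a principal minor of `A`. -/
def permTerm {V : Type*} [Fintype V] [DecidableEq V] (A : Matrix V V ℂ)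
    (σ : Equiv.Perm V) : ℂ :=
  ((Equiv.Perm.sign σ : ℤ) : ℂ) * permWeight A σ

section Weights

set_option linter.unusedSectionVars false

variable {V : Type*} [Fintype V] [DecidableEq V] {G : SimpleGraph V} {A : Matrix V V ℂ}
  {σ τ c d : Equiv.Perm V}

lemma Graphical.inv (h : Graphical G σ) : Graphical G σ⁻¹ := by
  intro x hx
  have := h (σ⁻¹ x) (by simpa using fun h => hx h.symm)
  simpa using this.symm

lemma disjoint_apply (h : σ.Disjoint τ) (x : V) :
    ((σ * τ) x = σ x ∧ τ x = x) ∨ ((σ * τ) x = τ x ∧ σ x = x) := by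
  rcases h x with hx | hx
  · right
    rw [h.commute.eq]
    simp [hx]
  · left
    simp [hx]

lemma Graphical.mul (hd : σ.Disjoint τ) (h : Graphical G σ) (h' : Graphical G τ) :
    Graphical G (σ * τ) := by
  intro x hx
  rcases disjoint_apply hd x with ⟨e, -⟩ | ⟨e, -⟩ <;> rw [e] at hx ⊢
  · exact h x hx
  · exact h' x hx

lemma Graphical.of_mul (hd : σ.Disjoint τ) (h : Graphical G (σ * τ)) :
    Graphical G σ ∧ Graphical G τ := by
  refine ⟨fun x hx => ?_, fun x hx => ?_⟩ <;> have := h x <;>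
    rcases disjoint_apply hd x with ⟨e, e'⟩ | ⟨e, e'⟩ <;> rw [e] at this <;> tauto

lemma permWeight_mul (hd : σ.Disjoint τ) :
    permWeight A (σ * τ) = permWeight A σ * permWeight A τ := by
  unfold permWeight
  rw [hd.support_mul, Finset.prod_union (Equiv.Perm.disjoint_iff_disjoint_support.1 hd)]
  congr 1 <;> refine Finset.prod_congr rfl fun x hx => ?_ <;>
    rw [Equiv.Perm.mem_support] at hx <;>
    rcases disjoint_apply hd x with ⟨e, e'⟩ | ⟨e, e'⟩ <;> first | exact absurd e' hx | rw [e]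

lemma permTerm_mul (hd : σ.Disjoint τ) :
    permTerm A (σ * τ) = permTerm A σ * permTerm A τ := by
  unfold permTerm
  rw [permWeight_mul hd, Equiv.Perm.sign_mul]
  push_cast
  ring

lemma permWeight_inv (hA : ThreeColored G A) :
    permWeight A σ⁻¹ = (starRingEnd ℂ) (permWeight A σ) := by
  unfold permWeight
  rw [map_prod, Equiv.Perm.support_inv]
  refine Finset.prod_equiv σ⁻¹ (fun x => by simp [Equiv.eq_symm_apply])
    fun x hx => ?_
  have := hA.1.apply x (σ⁻¹ x)
  rw [← this]
  simp

lemma permWeight_mem (hA : ThreeColored G A) (h : Graphical G σ) :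
    permWeight A σ ∈ ({1, -1, Complex.I, -Complex.I} : Set ℂ) := by
  unfold permWeight
  refine Finset.prod_induction _ (· ∈ ({1, -1, Complex.I, -Complex.I} : Set ℂ)) ?_ (by simp) ?_
  · rintro a b (rfl | rfl | rfl | rfl) (rfl | rfl | rfl | rfl) <;> simp
  · intro x hx
    exact hA.2.2.1 _ _ (h x (by simpa using hx))

lemma permTerm_ne_zero (hA : ThreeColored G A) (h : Graphical G σ) : permTerm A σ ≠ 0 := by
  have h1 : permWeight A σ ≠ 0 := by
    rcases permWeight_mem hA h with e | e | e | e <;> rw [e] <;> simp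
  have h2 : ((Equiv.Perm.sign σ : ℤ) : ℂ) ≠ 0 := by
    rcases Int.units_eq_one_or (Equiv.Perm.sign σ) with e | e <;> rw [e] <;> simp
  exact mul_ne_zero h2 h1

/-- A vertex `x` moved by an involution `τ` and its image `τ x` together contribute
`|A x (τ x)|² = 1`. -/
lemma permWeight_involutive (hA : ThreeColored G A) (h : Graphical G τ)
    (hi : Function.Involutive τ) : permWeight A τ = 1 := by
  refine Finset.prod_involution (fun x _ => τ x) ?_ ?_ ?_ ?_
  · intro x hx
    have h1 := hA.1.apply (τ x) x
    rw [hi x, ← h1]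
    rcases hA.2.2.1 _ _ (h x (by simpa using hx)) with e | e | e | e <;> rw [e] <;> simp
  · intro x hx _
    simpa using hx
  · intro x hx
    simpa using hx
  · intro x hx
    exact hi x

lemma sign_involutive (hi : Function.Involutive τ) :
    Even τ.support.card ∧ Equiv.Perm.sign τ = (-1) ^ (τ.support.card / 2) := by
  have h2 : τ ^ 2 = 1 := by
    ext x
    simpa [pow_two] using hi x
  have : Fact (Nat.Prime 2) := ⟨Nat.prime_two⟩
  have h := Multiset.eq_replicate_card.2 (Equiv.Perm.pow_prime_eq_one_iff.1 h2)
  have hs := Equiv.Perm.sum_cycleType τ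
  rw [h, Multiset.sum_replicate, smul_eq_mul] at hs
  refine ⟨⟨τ.cycleType.card, by omega⟩, ?_⟩
  rw [Equiv.Perm.sign_of_cycleType, Equiv.Perm.sum_cycleType, ← hs, pow_add, pow_mul',
    Nat.mul_div_cancel _ two_pos]
  simp

lemma permTerm_involutive (hA : ThreeColored G A) (h : Graphical G τ)
    (hi : Function.Involutive τ) :
    permTerm A τ = (-1) ^ (τ.support.card / 2) := by
  rw [permTerm, permWeight_involutive hA h hi, (sign_involutive hi).2]
  simp

lemma involutive_mul (hd : σ.Disjoint τ) (h : Function.Involutive σ)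
    (h' : Function.Involutive τ) : Function.Involutive (σ * τ : Equiv.Perm V) := by
  intro x
  have e : σ * τ * (σ * τ) = 1 := by
    have h1 : σ * σ = 1 := by ext x; simpa using h x
    have h2 : τ * τ = 1 := by ext x; simpa using h' x
    calc σ * τ * (σ * τ) = σ * (τ * σ) * τ := by group
      _ = (σ * σ) * (τ * τ) := by rw [← hd.commute.eq]; group
      _ = 1 := by rw [h1, h2, one_mul]
  exact DFunLike.congr_fun e x

/-- Splitting off one cycle of a permutation. -/
lemma exists_split (σ : Equiv.Perm V) (x : V) : ∃ τ, (σ.cycleOf x).Disjoint τ ∧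
    σ.cycleOf x * τ = σ := by
  by_cases hx : σ x = x
  · exact ⟨σ, by rw [(Equiv.Perm.cycleOf_eq_one_iff σ).2 hx]; simp⟩
  · have h := Equiv.Perm.disjoint_mul_inv_of_mem_cycleFactorsFinset
      (Equiv.Perm.cycleOf_mem_cycleFactorsFinset_iff.2 (Equiv.Perm.mem_support.2 hx))
    exact ⟨σ * (σ.cycleOf x)⁻¹, h.symm, by rw [← h.commute.eq]; group⟩

lemma cycleOf_mul_cases (hd : σ.Disjoint τ) (x : V) :
    ((σ * τ).cycleOf x = σ.cycleOf x ∧ τ x = x) ∨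
      ((σ * τ).cycleOf x = τ.cycleOf x ∧ σ x = x) := by
  rw [hd.cycleOf_mul_distrib]
  rcases hd x with hx | hx
  · right
    simp [(Equiv.Perm.cycleOf_eq_one_iff σ).2 hx, hx]
  · left
    simp [(Equiv.Perm.cycleOf_eq_one_iff τ).2 hx, hx]

lemma badSet_mul (hd : σ.Disjoint τ) : badSet A (σ * τ) = badSet A σ ∪ badSet A τ := by
  have h1 : ∀ (ρ : Equiv.Perm V) x, ρ x = x → x ∉ badSet A ρ := by
    intro ρ x hx
    simp [badSet, (Equiv.Perm.cycleOf_eq_one_iff ρ).2 hx, permWeight, Complex.ext_iff]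
  ext x
  rcases cycleOf_mul_cases hd x with ⟨e, hx⟩ | ⟨e, hx⟩
  · have := h1 _ _ hx
    simp only [Set.mem_union, this, or_false]
    simp [badSet, e]
  · have := h1 _ _ hx
    simp only [Set.mem_union, this, false_or]
    simp [badSet, e]

lemma cycleOf_inv_eq (σ : Equiv.Perm V) (x : V) [DecidableRel σ⁻¹.SameCycle] :
    σ⁻¹.cycleOf x = (σ.cycleOf x)⁻¹ := by
  rw [Equiv.Perm.cycleOf_inv]
  congr!

lemma mem_badSet {x : V} : x ∈ badSet A σ ↔
    permWeight A (σ.cycleOf x) ∈ ({Complex.I, -Complex.I} : Set ℂ) := Iff.rfl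

lemma badSet_inv (hA : ThreeColored G A) : badSet A σ⁻¹ = badSet A σ := by
  ext x
  have e : x ∈ badSet A σ⁻¹ ↔
      (starRingEnd ℂ) (permWeight A (σ.cycleOf x)) ∈ ({Complex.I, -Complex.I} : Set ℂ) := by
    rw [mem_badSet, cycleOf_inv_eq, permWeight_inv hA]
  rw [e, mem_badSet]
  generalize permWeight A (σ.cycleOf x) = z
  constructor
  · rintro (e | e)
    · right; rw [← Complex.conj_conj z, e]; simp
    · left; rw [← Complex.conj_conj z, e]; simp
  · rintro (rfl | rfl) <;> simp

/-! ### Expansion of the determinant and of the diagonal cofactors -/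

open Classical in
/-- Reversing a cycle of weight `±i` negates the contribution of a permutation, so only
good permutations contribute. -/
lemma sum_graphical_eq_sum_good (hA : ThreeColored G A) (S : Finset V) :
    ∑ σ : Equiv.Perm V with σ.support = S ∧ Graphical G σ, permTerm A σ =
      ∑ σ : Equiv.Perm V with σ.support = S ∧ Good G A σ, permTerm A σ := by
  rw [← Finset.sum_filter_add_sum_filter_not _ (fun σ => badSet A σ = ∅)]
  rw [Finset.filter_filter]
  have h0 : ∑ σ ∈ (Finset.univ.filter fun σ : Equiv.Perm V => σ.support = S ∧ Graphical G σ).filter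
      (fun σ => ¬ badSet A σ = ∅), permTerm A σ = 0 := by
    -- the cycle to be reversed is chosen as a function of `badSet`, which reversal preserves
    let pick : Set V → Equiv.Perm V → Equiv.Perm V := fun s σ =>
      if h : s.Nonempty then (σ.cycleOf h.some) else 1
    let g : Equiv.Perm V → Equiv.Perm V := fun σ =>
      (pick (badSet A σ) σ)⁻¹ * ((pick (badSet A σ) σ)⁻¹ * σ)
    have key : ∀ σ, ¬ badSet A σ = ∅ → ∃ c τ : Equiv.Perm V, c.Disjoint τ ∧ σ = c * τ ∧
        permWeight A c ∈ ({Complex.I, -Complex.I} : Set ℂ) ∧ g σ = c⁻¹ * τ ∧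
        g (c⁻¹ * τ) = σ ∧ badSet A (g σ) = badSet A σ := by
      intro σ hσ
      have hne := Set.nonempty_iff_ne_empty.2 hσ
      obtain ⟨τ, hd, hτ⟩ := exists_split σ hne.some
      have hd' : (σ.cycleOf hne.some)⁻¹.Disjoint τ := hd.inv_left
      have e1 : g σ = (σ.cycleOf hne.some)⁻¹ * τ := by
        simp only [g, pick, hne, dite_true]
        generalize σ.cycleOf _ = c at *
        rw [← hτ]
        group
      have e2 : badSet A ((σ.cycleOf hne.some)⁻¹ * τ) = badSet A σ := by
        rw [badSet_mul hd', badSet_inv hA, ← badSet_mul hd, hτ]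
      refine ⟨σ.cycleOf hne.some, τ, hd, hτ.symm, hne.some_mem, e1, ?_, by rw [e1, e2]⟩
      have hb := hne.some_mem
      generalize hx : hne.some = x at *
      have hxm : σ x ≠ x := by
        intro h
        have : x ∈ badSet A σ := hb
        simp [badSet, (Equiv.Perm.cycleOf_eq_one_iff σ).2 h, permWeight, Complex.ext_iff] at this
      have e3 : ((σ.cycleOf x)⁻¹ * τ).cycleOf x = (σ.cycleOf x)⁻¹ := by
        have hcx : (σ.cycleOf x) x ≠ x := by simpa using hxm
        rcases cycleOf_mul_cases hd' x with ⟨e, -⟩ | ⟨-, h⟩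
        · rw [e, cycleOf_inv_eq]
          congr 1
          exact (Equiv.Perm.isCycle_cycleOf σ hxm).cycleOf_eq hcx
        · exact absurd (Equiv.Perm.inv_eq_iff_eq.1 h).symm hcx
      simp only [g, pick, e2, hne, dite_true, hx, e3]
      conv_rhs => rw [← hτ]
      group
    refine Finset.sum_involution (fun σ _ => g σ) ?_ ?_ ?_ ?_
    · intro σ hσ
      simp only [Finset.mem_filter] at hσ
      obtain ⟨c, τ, hd, e, hw, e1, -, -⟩ := key σ hσ.2
      rw [e1, e, permTerm_mul hd, permTerm_mul hd.inv_left]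
      have : permTerm A c⁻¹ = - permTerm A c := by
        unfold permTerm
        rw [permWeight_inv hA, Equiv.Perm.sign_inv]
        rcases hw with h | h <;> rw [h] <;> simp
      rw [this]
      ring
    · intro σ hσ hne heq
      simp only [Finset.mem_filter] at hσ
      obtain ⟨c, τ, hd, e, hw, e1, -, -⟩ := key σ hσ.2
      have hcc : c⁻¹ = c := by
        rw [e1, e] at heq
        exact mul_right_cancel heq
      have := permWeight_inv (σ := c) hA
      rw [hcc] at this
      rcases hw with h | h <;> rw [h] at this <;> simp [Complex.ext_iff] at this <;> norm_num at this
    · intro σ hσ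
      simp only [Finset.mem_filter, Finset.mem_univ, true_and] at hσ ⊢
      obtain ⟨c, τ, hd, e, hw, e1, -, e3⟩ := key σ hσ.2
      refine ⟨⟨?_, ?_⟩, by rw [e3]; exact hσ.2⟩
      · rw [e1, hd.inv_left.support_mul, Equiv.Perm.support_inv, ← hd.support_mul, ← e]
        exact hσ.1.1
      · rw [e1]
        have := hσ.1.2
        rw [e] at this
        obtain ⟨h1, h2⟩ := Graphical.of_mul hd this
        exact Graphical.mul hd.inv_left h1.inv h2
    · intro σ hσ
      simp only [Finset.mem_filter] at hσ
      obtain ⟨c, τ, hd, e, hw, e1, e2, -⟩ := key σ hσ.2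
      rw [e1, e2]
  rw [h0, add_zero]
  refine Finset.sum_congr ?_ fun _ _ => rfl
  ext σ
  rw [Finset.mem_filter, Finset.mem_filter, and_assoc]
  rfl

open Classical in
lemma sum_good_eq_sum_prod (hA : ThreeColored G A) (S : Finset V) :
    ∑ σ : Equiv.Perm V with σ.support = S ∧ Good G A σ, permTerm A σ =
      ∑ σ : Equiv.Perm V with σ.support = S, permTerm A σ := by
  rw [← sum_graphical_eq_sum_good hA, ← Finset.filter_filter]
  refine Finset.sum_filter_of_ne fun σ _ hne x hx => ?_
  by_contra hadj
  refine hne (mul_eq_zero_of_right _ (Finset.prod_eq_zero (Equiv.Perm.mem_support.2 hx) ?_))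
  exact hA.2.2.2 _ _ (Ne.symm hx) hadj

open Classical in
lemma det_eq_sum (hA : ThreeColored G A) :
    A.det = ∑ σ : Equiv.Perm V with σ.support = Finset.univ ∧ Good G A σ, permTerm A σ := by
  rw [sum_good_eq_sum_prod hA, ← Matrix.det_transpose, Matrix.det_apply', Finset.sum_filter]
  refine Finset.sum_congr rfl fun σ _ => ?_
  split_ifs with h
  · simp [permTerm, permWeight, h]
  · obtain ⟨x, hx⟩ : ∃ x, σ x = x := by
      by_contra! hc
      exact h (by ext x; simpa using hc x)
    refine mul_eq_zero_of_right _ (Finset.prod_eq_zero (Finset.mem_univ x) ?_)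
    simp [hx, hA.2.1]

open Classical in
lemma adjugate_eq_sum (hA : ThreeColored G A) (v : V) :
    A.adjugate v v =
      ∑ σ : Equiv.Perm V with σ.support = Finset.univ.erase v ∧ Good G A σ, permTerm A σ := by
  rw [sum_good_eq_sum_prod hA, Matrix.adjugate_apply, ← Matrix.det_transpose, Matrix.det_apply',
    Finset.sum_filter]
  refine Finset.sum_congr rfl fun σ _ => ?_
  split_ifs with h
  · have hv : σ v = v := by
      rw [← Equiv.Perm.notMem_support, h]
      simp
    rw [permTerm, permWeight, h, ← Finset.mul_prod_erase _ _ (Finset.mem_univ v)]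
    congr 1
    simp only [Matrix.transpose_apply, hv, Matrix.updateRow_self, Pi.single_eq_same, one_mul]
    refine Finset.prod_congr rfl fun x hx => ?_
    rw [Matrix.updateRow_ne (Finset.ne_of_mem_erase hx)]
  · refine mul_eq_zero_of_right _ ?_
    by_cases hv : σ v = v
    · obtain ⟨x, hxv, hx⟩ : ∃ x, x ≠ v ∧ σ x = x := by
        by_contra! hc
        refine h ?_
        ext x
        by_cases hx : x = v
        · simp [hx, hv]
        · simpa [hx] using hc x hx
      refine Finset.prod_eq_zero (Finset.mem_univ x) ?_
      rw [Matrix.transpose_apply, Matrix.updateRow_ne hxv, hx, hA.2.1]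
    · refine Finset.prod_eq_zero (Finset.mem_univ v) ?_
      simp [hv]

open Classical in
lemma exists_good_of_sum_ne_zero {S : Finset V}
    (h : ∑ σ : Equiv.Perm V with σ.support = S ∧ Good G A σ, permTerm A σ ≠ 0) :
    ∃ σ : Equiv.Perm V, σ.support = S ∧ Good G A σ := by
  obtain ⟨σ, hσ, -⟩ := Finset.exists_ne_zero_of_sum_ne_zero h
  exact ⟨σ, by simpa using hσ⟩

open Classical in
/-- There is no cancellation when all good permutations contribute equally. -/
lemma sum_ne_zero_of_good (hA : ThreeColored G A) {S : Finset V} (hσ : Good G A σ)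
    (hS : σ.support = S)
    (h : ∀ τ, Good G A τ → τ.support = S → permTerm A τ = permTerm A σ) :
    ∑ σ : Equiv.Perm V with σ.support = S ∧ Good G A σ, permTerm A σ ≠ 0 := by
  rw [Finset.sum_congr rfl (g := fun _ => permTerm A σ)
    (fun τ hτ => by simp only [Finset.mem_filter] at hτ; exact h τ hτ.2.2 hτ.2.1),
    Finset.sum_const, nsmul_eq_mul]
  refine mul_ne_zero ?_ (permTerm_ne_zero hA hσ.1)
  rw [Nat.cast_ne_zero, ← Nat.pos_iff_ne_zero, Finset.card_pos]
  exact ⟨σ, by simp [hσ, hS]⟩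

lemma inv_diag_eq_zero_iff (hdet : A.det ≠ 0) (v : V) : A⁻¹ v v = 0 ↔ A.adjugate v v = 0 := by
  rw [Matrix.inv_def, Matrix.smul_apply, Ring.inverse_eq_inv', smul_eq_mul, mul_eq_zero]
  simp [hdet]

end Weights

/-! ### Cyclic permutations and cycles of the graph -/

section Cycles

variable {V : Type*} [Fintype V] [DecidableEq V] {G : SimpleGraph V} {A : Matrix V V ℂ}
  {σ τ c d : Equiv.Perm V}

set_option linter.unusedSectionVars false

lemma exists_iterate_walk (A : Matrix V V ℂ) (hc : Graphical G c) (k : ℕ) : ∀ x y : V, c x ≠ x →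
    c^[k] x = y →
    ∃ p : G.Walk x y, p.length = k ∧ p.support.tail = List.iterate c (c x) k ∧
      p.edges = (List.iterate c x k).map (fun z => s(z, c z)) ∧
      walkWeight A p = ((List.iterate c x k).map (fun z => A z (c z))).prod := by
  induction k with
  | zero =>
    rintro x y hx rfl
    exact ⟨.nil, by simp [walkWeight]⟩
  | succ k ih =>
    intro x y hx hy
    obtain ⟨p, h1, h2, h3, h4⟩ := ih (c x) y (by simpa using hx) hy
    refine ⟨.cons (hc x hx) p, by simp [h1], ?_, by simp [h3], ?_⟩
    · rw [SimpleGraph.Walk.support_cons, List.tail_cons, ← p.cons_tail_support, h2]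
      rfl
    · simp only [walkWeight] at h4
      simp [walkWeight, h4]

lemma iterate_support_nodup (hc : c.IsCycle) {x : V} (hx : c x ≠ x) :
    (List.iterate c x c.support.card).Nodup := by
  have := Equiv.Perm.nodup_toList c x
  rwa [Equiv.Perm.toList, hc.cycleOf_eq hx] at this

lemma iterate_support_toFinset (hc : c.IsCycle) {x : V} (hx : c x ≠ x) :
    (List.iterate c x c.support.card).toFinset = c.support := by
  refine Finset.eq_of_subset_of_card_le ?_ ?_
  · intro y hy
    rw [List.mem_toFinset, List.mem_iterate] at hy
    obtain ⟨m, -, rfl⟩ := hy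
    rw [Equiv.Perm.iterate_eq_pow]
    simpa using hx
  · rw [List.toFinset_card_of_nodup (iterate_support_nodup hc hx), List.length_iterate]

lemma long_of_long (hc : c.IsCycle) {x y : V} (hx : c (c x) ≠ x) (hy : c y ≠ y) :
    c (c y) ≠ y := by
  intro h
  have e : c ^ 2 = 1 := (hc.pow_eq_one_iff).2 ⟨y, hy, by simpa [pow_two] using h⟩
  exact hx (by simpa [pow_two] using DFunLike.congr_fun e x)

/-- A graphical cyclic permutation of length at least three traces out a cycle of the graph. -/
lemma exists_walk_of_isCycle (A : Matrix V V ℂ) (hc : c.IsCycle) (hG : Graphical G c)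
    {x : V} (hx : c (c x) ≠ x) :
    ∃ p : G.Walk x x, p.IsCycle ∧ p.length = c.support.card ∧ (∀ z, z ∈ p.support ↔ c z ≠ z) ∧
      (∀ e, e ∈ p.edges ↔ ∃ z, c z ≠ z ∧ e = s(z, c z)) ∧ walkWeight A p = permWeight A c := by
  have hx1 : c x ≠ x := fun h => hx (by rw [h, h])
  have hx2 : c (c x) ≠ c x := by simpa using hx1
  have hmem : ∀ y, y ∈ List.iterate c x c.support.card ↔ c y ≠ y := fun y => by
    rw [← List.mem_toFinset, iterate_support_toFinset hc hx1, Equiv.Perm.mem_support]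
  have hmem' : ∀ y, y ∈ List.iterate c (c x) c.support.card ↔ c y ≠ y := fun y => by
    rw [← List.mem_toFinset, iterate_support_toFinset hc hx2, Equiv.Perm.mem_support]
  have hend : c^[c.support.card] x = x := by
    rw [Equiv.Perm.iterate_eq_pow, ← hc.orderOf, pow_orderOf_eq_one]
    rfl
  obtain ⟨p, h1, h2, h3, h4⟩ := exists_iterate_walk A hG _ x x hx1 hend
  refine ⟨p, ?_, h1, ?_, ?_, ?_⟩
  · rw [SimpleGraph.Walk.isCycle_def]
    refine ⟨⟨?_⟩, ?_, ?_⟩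
    · rw [h3]
      refine List.Nodup.map_on ?_ (iterate_support_nodup hc hx1)
      intro y hy z hz hyz
      rcases Sym2.eq_iff.1 hyz with ⟨h, -⟩ | ⟨e, e'⟩
      · exact h
      · exact absurd (e ▸ e') (long_of_long hc hx ((hmem z).1 hz))
    · rintro rfl
      have : x ∈ c.support := Equiv.Perm.mem_support.2 hx1
      rw [SimpleGraph.Walk.length_nil, eq_comm, Finset.card_eq_zero] at h1
      simp [h1] at this
    · rw [h2]
      exact iterate_support_nodup hc hx2
  · intro z
    rw [← p.cons_tail_support, h2, List.mem_cons, hmem']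
    exact ⟨fun h => h.elim (fun h => h ▸ hx1) id, Or.inr⟩
  · intro e
    simp only [h3, List.mem_map, hmem]
    grind
  · rw [h4, permWeight, ← List.prod_toFinset _ (iterate_support_nodup hc hx1),
      iterate_support_toFinset hc hx1]

/-- Conversely, a cycle of the graph is traced out by a cyclic permutation. -/
lemma exists_perm_of_walk (A : Matrix V V ℂ) {u : V} (p : G.Walk u u) (hp : p.IsCycle) :
    ∃ c : Equiv.Perm V, c.IsCycle ∧ Graphical G c ∧ c (c u) ≠ u ∧ (∀ z, z ∈ p.support ↔ c z ≠ z) ∧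
      c.support.card = p.length ∧ permWeight A c = walkWeight A p := by
  have h3 := hp.three_le_length
  have hnd : (p.darts.map (·.fst)).Nodup := by
    rw [SimpleGraph.Walk.map_fst_darts]
    exact hp.nodup_dropLast_support
  have hlen : (p.darts.map (·.fst)).length = p.length := by simp
  set l := p.darts.map (·.fst) with hl
  have hl' : l = p.support.dropLast := SimpleGraph.Walk.map_fst_darts p
  have hget : ∀ i (hi : i < l.length), l[i] = p.getVert i := by
    intro i hi
    simp only [hl', List.getElem_dropLast]
    rw [SimpleGraph.Walk.support_getElem_eq_getVert]
  have hap : ∀ i, i < p.length → l.formPerm (p.getVert i) = p.getVert (i + 1) := by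
    intro i hi
    rw [← hget i (by omega), List.formPerm_apply_getElem _ hnd, hget]
    rcases Nat.lt_or_ge (i + 1) p.length with h | h
    · rw [hlen, Nat.mod_eq_of_lt h]
    · have : i + 1 = p.length := by omega
      rw [hlen, this, Nat.mod_self]
      simp
  have hdart : ∀ a ∈ p.darts, l.formPerm a.fst = a.snd := by
    intro a ha
    obtain ⟨i, hi, rfl⟩ := List.getElem_of_mem ha
    have hi' : i < p.length := by simpa using hi
    have := hap i hi'
    rwa [SimpleGraph.Walk.fst_darts_getElem, SimpleGraph.Walk.snd_darts_getElem,
      List.getElem_dropLast, List.getElem_tail, SimpleGraph.Walk.support_getElem_eq_getVert,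
      SimpleGraph.Walk.support_getElem_eq_getVert]
  have hsupp : l.formPerm.support = l.toFinset := by
    refine List.support_formPerm_of_nodup l hnd ?_
    intro x hx
    rw [hx] at hlen
    simp at hlen
    omega
  refine ⟨l.formPerm, List.isCycle_formPerm hnd (by omega), ?_, ?_, ?_, ?_, ?_⟩
  · intro x hx
    have : x ∈ l := by
      rw [← List.mem_toFinset, ← hsupp]
      simpa using hx
    obtain ⟨a, ha, rfl⟩ := List.mem_map.1 this
    rw [hdart a ha]
    exact a.adj
  · have h0 := hap 0 (by omega)
    have h1 := hap 1 (by omega)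
    rw [SimpleGraph.Walk.getVert_zero] at h0
    rw [h0, h1]
    intro h
    have := hnd.getElem_inj_iff (i := 0) (j := 2) (hi := by omega) (hj := by omega)
    rw [hget, hget] at this
    simp [h] at this
  · intro z
    rw [← Equiv.Perm.mem_support, hsupp, List.mem_toFinset, hl',
      ← p.tail_support_perm_dropLast_support.mem_iff]
    rw [SimpleGraph.Walk.mem_support_iff]
    refine ⟨fun h => h.elim (fun h => ?_) id, Or.inr⟩
    rw [h]
    exact SimpleGraph.Walk.end_mem_tail_support hp.not_nil
  · rw [hsupp, List.toFinset_card_of_nodup hnd, hlen]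
  · rw [permWeight, hsupp, List.prod_toFinset _ hnd, hl, List.map_map, walkWeight]
    congr 1
    refine List.map_congr_left fun a ha => ?_
    simp only [Function.comp]
    rw [← hl, hdart a ha]

lemma eq_of_apply_eq (hc : c.IsCycle) (hd : d.IsCycle) {x y : V} (hx : c x ≠ x)
    (hy : d (d y) ≠ y) (h : ∀ z, c z ≠ z ↔ d z ≠ z)
    (hn : ∀ z, d z = c z ∨ d z = c⁻¹ z) (hxe : d x = c x) : d = c := by
  have key : ∀ k : ℕ, d ((c ^ k) x) = c ((c ^ k) x) := by
    intro k
    induction k with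
    | zero => simpa using hxe
    | succ k ih =>
      rw [pow_succ', Equiv.Perm.mul_apply]
      rcases hn (c ((c ^ k) x)) with e | e
      · exact e
      · have e' : c⁻¹ (c ((c ^ k) x)) = (c ^ k) x := by simp
        rw [e', ← ih] at e
        refine absurd e (long_of_long hd hy ?_)
        rw [← h, ← Equiv.Perm.mem_support, Equiv.Perm.pow_apply_mem_support,
          Equiv.Perm.mem_support]
        exact hx
  ext z
  by_cases hz : c z = z
  · rw [not_iff_not.1 (h z) |>.1 hz, hz]
  · obtain ⟨k, rfl⟩ := hc.exists_pow_eq hx hz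
    exact key k

/-- A cyclic permutation is determined up to inversion by its set of undirected edges. -/
lemma eq_or_eq_inv_of_edges (hc : c.IsCycle) (hd : d.IsCycle) {x y : V} (hx : c x ≠ x)
    (hy : d (d y) ≠ y) (h : ∀ z, c z ≠ z ↔ d z ≠ z)
    (hn : ∀ z, d z = c z ∨ d z = c⁻¹ z) : d = c ∨ d = c⁻¹ := by
  rcases hn x with e | e
  · exact Or.inl (eq_of_apply_eq hc hd hx hy h hn e)
  · refine Or.inr (eq_of_apply_eq hc.inv hd (x := x) ?_ hy ?_ ?_ e)
    · rw [Ne, Equiv.Perm.inv_eq_iff_eq]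
      exact Ne.symm hx
    · intro z
      rw [← h, Ne, Equiv.Perm.inv_eq_iff_eq, eq_comm]
    · intro z
      rw [inv_inv]
      exact (hn z).symm

/-- The hypothesis of the theorem: all cycles not of weight `±i` coincide. -/
def AtMostOneReal {V : Type*} [DecidableEq V] (G : SimpleGraph V) (A : Matrix V V ℂ) : Prop :=
  ∀ (u v : V) (c : G.Walk u u) (d : G.Walk v v), c.IsCycle → d.IsCycle →
      walkWeight A c ∉ ({Complex.I, -Complex.I} : Set ℂ) →
      walkWeight A d ∉ ({Complex.I, -Complex.I} : Set ℂ) → SameCycle c d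

lemma eq_or_eq_inv_of_real (hexc : AtMostOneReal G A)
    (hc : c.IsCycle) (hcG : Graphical G c) {x : V} (hx : c (c x) ≠ x)
    (hcw : permWeight A c ∉ ({Complex.I, -Complex.I} : Set ℂ))
    (hd : d.IsCycle) (hdG : Graphical G d) {y : V} (hy : d (d y) ≠ y)
    (hdw : permWeight A d ∉ ({Complex.I, -Complex.I} : Set ℂ)) : d = c ∨ d = c⁻¹ := by
  obtain ⟨p, p1, p2, p3, p4, p5⟩ := exists_walk_of_isCycle A hc hcG hx
  obtain ⟨q, q1, q2, q3, q4, q5⟩ := exists_walk_of_isCycle A hd hdG hy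
  have hs := hexc x y p q p1 q1 (by rwa [p5]) (by rwa [q5])
  have he : ∀ e, e ∈ p.edges ↔ e ∈ q.edges := fun e => by
    rw [← List.mem_toFinset, ← List.mem_toFinset (l := q.edges), hs]
  have hmem : ∀ z, c z ≠ z ↔ d z ≠ z := by
    intro z
    constructor
    · intro hz
      obtain ⟨w, hw, e⟩ := (q4 _).1 ((he _).1 ((p4 _).2 ⟨z, hz, rfl⟩))
      rcases Sym2.eq_iff.1 e with ⟨rfl, -⟩ | ⟨rfl, -⟩
      · exact hw
      · simpa using hw
    · intro hz
      obtain ⟨w, hw, e⟩ := (p4 _).1 ((he _).2 ((q4 _).2 ⟨z, hz, rfl⟩))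
      rcases Sym2.eq_iff.1 e with ⟨rfl, -⟩ | ⟨rfl, -⟩
      · exact hw
      · simpa using hw
  refine eq_or_eq_inv_of_edges hc hd (x := x) (fun h => hx (by rw [h, h])) hy hmem ?_
  intro z
  by_cases hz : d z = z
  · left
    rw [not_iff_not.1 (hmem z) |>.2 hz, hz]
  · obtain ⟨w, hw, e⟩ := (p4 _).1 ((he _).2 ((q4 _).2 ⟨z, hz, rfl⟩))
    rcases Sym2.eq_iff.1 e with ⟨rfl, h⟩ | ⟨h, h'⟩
    · exact Or.inl h
    · right
      rw [h', Equiv.Perm.eq_inv_iff_eq]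
      exact h.symm

/-! ### The structure of good permutations -/

lemma Good.of_mul (hd : σ.Disjoint τ) (h : Good G A (σ * τ)) : Good G A σ ∧ Good G A τ := by
  obtain ⟨h1, h2⟩ := h
  rw [badSet_mul hd, Set.union_empty_iff] at h2
  obtain ⟨h3, h4⟩ := Graphical.of_mul hd h1
  exact ⟨⟨h3, h2.1⟩, ⟨h4, h2.2⟩⟩

lemma Good.mul (hd : σ.Disjoint τ) (h : Good G A σ) (h' : Good G A τ) : Good G A (σ * τ) :=
  ⟨h.1.mul hd h'.1, by rw [badSet_mul hd, h.2, h'.2, Set.union_empty]⟩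

lemma good_of_involutive (hA : ThreeColored G A) (h : Graphical G τ)
    (hi : Function.Involutive τ) : Good G A τ := by
  refine ⟨h, ?_⟩
  ext x
  simp only [Set.mem_empty_iff_false, iff_false, mem_badSet]
  obtain ⟨ρ, hd, e⟩ := exists_split τ x
  have h1 : Graphical G (τ.cycleOf x) := (Graphical.of_mul hd (by rwa [e])).1
  have h2 : Function.Involutive (τ.cycleOf x) := by
    intro y
    have h' : ∀ y, τ.cycleOf x y ≠ y → τ.cycleOf x y = τ y := fun y hy => by
      rcases disjoint_apply hd y with ⟨e', -⟩ | ⟨-, e'⟩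
      · rw [← e', e]
      · exact absurd e' hy
    by_cases hy : τ.cycleOf x y = y
    · rw [hy, hy]
    · have hy' : τ.cycleOf x (τ.cycleOf x y) ≠ τ.cycleOf x y := by simpa using hy
      rw [h' _ hy', h' _ hy, hi y]
  rw [permWeight_involutive hA h1 h2]
  simp [Complex.ext_iff]

lemma good_isCycle_iff (hc : c.IsCycle) : Good G A c ↔
    Graphical G c ∧ permWeight A c ∉ ({Complex.I, -Complex.I} : Set ℂ) := by
  refine and_congr_right fun _ => ?_
  obtain ⟨x, hx, -⟩ := id hc
  constructor
  · intro h hw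
    have : x ∈ badSet A c := by rwa [mem_badSet, hc.cycleOf_eq hx]
    rw [h] at this
    exact this
  · intro hw
    ext y
    simp only [Set.mem_empty_iff_false, iff_false, mem_badSet]
    by_cases hy : c y = y
    · simp [(Equiv.Perm.cycleOf_eq_one_iff c).2 hy, permWeight, Complex.ext_iff]
    · rwa [hc.cycleOf_eq hy]

/-- A good permutation which is not an involution consists of one real cycle and an
involution. -/
lemma Good.exists_split (hexc : AtMostOneReal G A) (h : Good G A σ) {x : V} (hx : σ (σ x) ≠ x) :
    ∃ c τ : Equiv.Perm V, σ = c * τ ∧ c.Disjoint τ ∧ c.IsCycle ∧ c (c x) ≠ x ∧ Good G A c ∧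
      Good G A τ ∧ Function.Involutive τ := by
  have hx1 : σ x ≠ x := fun h => hx (by rw [h, h])
  obtain ⟨τ, hd, e⟩ := _root_.exists_split σ x
  have hc := Equiv.Perm.isCycle_cycleOf σ hx1
  have hgood := Good.of_mul hd (by rwa [e])
  have hcx : σ.cycleOf x (σ.cycleOf x x) ≠ x := by
    rw [Equiv.Perm.cycleOf_apply_self, Equiv.Perm.cycleOf_apply_apply_self]
    exact hx
  refine ⟨σ.cycleOf x, τ, e.symm, hd, hc, hcx, hgood.1, hgood.2, ?_⟩
  by_contra hni
  simp only [Function.Involutive, not_forall] at hni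
  obtain ⟨y, hy⟩ := hni
  have hy1 : τ y ≠ y := fun h => hy (by rw [h, h])
  obtain ⟨ρ, hd', e'⟩ := _root_.exists_split τ y
  have hc' := Equiv.Perm.isCycle_cycleOf τ hy1
  have hgood' := Good.of_mul hd' (by rw [e']; exact hgood.2)
  have hcy : τ.cycleOf y (τ.cycleOf y y) ≠ y := by
    rw [Equiv.Perm.cycleOf_apply_self, Equiv.Perm.cycleOf_apply_apply_self]
    exact hy
  have hfix : σ.cycleOf x y = y := (hd y).resolve_right hy1
  have hne : τ.cycleOf y y ≠ y := by rwa [Equiv.Perm.cycleOf_apply_self]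
  rcases eq_or_eq_inv_of_real hexc hc hgood.1.1 hcx ((good_isCycle_iff hc).1 hgood.1).2
    hc' hgood'.1.1 hcy ((good_isCycle_iff hc').1 hgood'.1).2 with h | h
  · rw [h] at hne
    exact hne hfix
  · rw [h] at hne
    exact hne (Equiv.Perm.inv_eq_iff_eq.2 hfix.symm)

lemma permTerm_eq_of_real (hA : ThreeColored G A) (hexc : AtMostOneReal G A)
    (hc : c.IsCycle) (hcG : Good G A c) {x : V} (hx : c (c x) ≠ x)
    (hd : d.IsCycle) (hdG : Good G A d) {y : V} (hy : d (d y) ≠ y) :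
    permTerm A d = permTerm A c ∧ d.support = c.support := by
  have hw := ((good_isCycle_iff hc).1 hcG).2
  rcases eq_or_eq_inv_of_real hexc hc hcG.1 hx hw
    hd hdG.1 hy ((good_isCycle_iff hd).1 hdG).2 with rfl | rfl
  · exact ⟨rfl, rfl⟩
  · refine ⟨?_, Equiv.Perm.support_inv c⟩
    rw [permTerm, permTerm, permWeight_inv hA, Equiv.Perm.sign_inv]
    congr 1
    rcases permWeight_mem hA hcG.1 with e | e | e | e
    · simp [e]
    · simp [e]
    · exact absurd (Or.inl e) hw
    · exact absurd (Or.inr e) hw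

lemma permTerm_eq_of_not_involutive (hA : ThreeColored G A) (hexc : AtMostOneReal G A)
    (hσ : Good G A σ) (hτ : Good G A τ) (hs : σ.support = τ.support)
    (h1 : ¬ Function.Involutive σ) (h2 : ¬ Function.Involutive τ) :
    permTerm A σ = permTerm A τ := by
  simp only [Function.Involutive, not_forall] at h1 h2
  obtain ⟨x, hx⟩ := h1
  obtain ⟨y, hy⟩ := h2
  obtain ⟨c, σ', rfl, hd, hc, hcx, hcg, hg, hi⟩ := hσ.exists_split hexc hx
  obtain ⟨c', τ', rfl, hd', hc', hcx', hcg', hg', hi'⟩ := hτ.exists_split hexc hy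
  obtain ⟨e1, e2⟩ := permTerm_eq_of_real hA hexc hc' hcg' hcx' hc hcg hcx
  have h3 := hd.card_support_mul
  have h4 := hd'.card_support_mul
  rw [hs, e2] at h3
  rw [permTerm_mul hd, permTerm_mul hd', e1, permTerm_involutive hA hg.1 hi,
    permTerm_involutive hA hg'.1 hi', show σ'.support.card = τ'.support.card by omega]

end Cycles

/-! ### Perfect matchings as fixed-point free involutions -/

section Matchings

variable {V : Type*} [Fintype V] [DecidableEq V] {G : SimpleGraph V} {A : Matrix V V ℂ}
  {σ τ c d m : Equiv.Perm V}

set_option linter.unusedSectionVars false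

lemma exists_involution_of_isPM {M : Finset (Sym2 V)} (hM : IsPM G M) :
    ∃ m : Equiv.Perm V, Function.Involutive m ∧ (∀ x, m x ≠ x) ∧ Graphical G m ∧
      (∀ x, s(x, m x) ∈ M) ∧ ∀ e ∈ M, ∀ x ∈ e, e = s(x, m x) := by
  have h1 : ∀ x, ∃ y, s(x, y) ∈ M ∧ ∀ e ∈ M, x ∈ e → e = s(x, y) := by
    intro x
    obtain ⟨e, he⟩ := Finset.card_eq_one.1 (hM.2 x)
    have hmem : ∀ e', e' ∈ M ∧ x ∈ e' ↔ e' = e := fun e' => by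
      rw [← Finset.mem_filter (p := fun e => x ∈ e), he, Finset.mem_singleton]
    obtain ⟨h2, y, rfl⟩ := (hmem e).2 rfl
    exact ⟨y, h2, fun e' h h' => (hmem e').1 ⟨h, h'⟩⟩
  choose f hf hf' using h1
  have hadj : ∀ x, G.Adj x (f x) := fun x => hM.1 _ (hf x)
  have hinv : Function.Involutive f := by
    intro x
    have := hf' (f x) _ (hf x) (by simp)
    rw [Sym2.eq_swap, Sym2.congr_right] at this
    exact this.symm
  exact ⟨hinv.toPerm, hinv, fun x => (hadj x).ne', fun x _ => hadj x, hf,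
    fun e he x hx => hf' x e he hx⟩

lemma isPM_of_involution (hi : Function.Involutive m) (hne : ∀ x, m x ≠ x)
    (hG : Graphical G m) : IsPM G (Finset.univ.image fun x => s(x, m x)) := by
  refine ⟨?_, fun v => ?_⟩
  · intro e he
    obtain ⟨x, -, rfl⟩ := Finset.mem_image.1 he
    exact hG x (hne x)
  · rw [Finset.card_eq_one]
    refine ⟨s(v, m v), ?_⟩
    ext e
    simp only [Finset.mem_filter, Finset.mem_image, Finset.mem_univ, true_and,
      Finset.mem_singleton]
    constructor
    · rintro ⟨⟨x, rfl⟩, hv⟩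
      rcases Sym2.mem_iff.1 hv with rfl | rfl
      · rfl
      · rw [hi x, Sym2.eq_swap]
    · rintro rfl
      exact ⟨⟨v, rfl⟩, by simp⟩

lemma exists_restrict (hi : Function.Involutive m) (T : Set V) (hT : ∀ z ∈ T, m z ∈ T) :
    ∃ τ : Equiv.Perm V, Function.Involutive τ ∧ (∀ z ∈ T, τ z = m z) ∧ ∀ z ∉ T, τ z = z := by
  classical
  have h : Function.Involutive (fun z => if z ∈ T then m z else z) := by
    intro z
    by_cases hz : z ∈ T
    · simp [hz, hT z hz, hi z]
    · simp [hz]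
  exact ⟨h.toPerm, h, fun z hz => by simp [hz], fun z hz => by simp [hz]⟩

/-- Pairing consecutive terms of an orbit segment of even length. -/
lemma exists_pairing (c : Equiv.Perm V) (f : ℕ → V) (hf : ∀ j, f (j + 1) = c (f j)) (k : ℕ) :
    (∀ i < 2 * k, ∀ j < 2 * k, f i = f j → i = j) →
    ∃ ρ : Equiv.Perm V, Function.Involutive ρ ∧ ρ.support = (Finset.range (2 * k)).image f ∧
      ∀ z, ρ z = z ∨ ρ z = c z ∨ c (ρ z) = z := by
  induction k with
  | zero => exact fun _ => ⟨1, fun _ => rfl, by simp, fun _ => Or.inl rfl⟩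
  | succ k ih =>
    intro h
    obtain ⟨ρ, h1, h2, h3⟩ := ih fun i hi j hj => h i (by omega) j (by omega)
    have hne : f (2 * k) ≠ f (2 * k + 1) := fun e => by
      have := h _ (by omega) _ (by omega) e
      omega
    have hd : ρ.Disjoint (Equiv.swap (f (2 * k)) (f (2 * k + 1))) := by
      rw [Equiv.Perm.disjoint_iff_disjoint_support, Equiv.Perm.support_swap hne, h2,
        Finset.disjoint_left]
      intro z hz hz'
      obtain ⟨i, hi, rfl⟩ := Finset.mem_image.1 hz
      rw [Finset.mem_range] at hi
      simp only [Finset.mem_insert, Finset.mem_singleton] at hz'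
      rcases hz' with e | e <;> have := h _ (by omega) _ (by omega) e <;> omega
    refine ⟨ρ * Equiv.swap (f (2 * k)) (f (2 * k + 1)), ?_, ?_, ?_⟩
    · exact involutive_mul hd h1 (fun z => Equiv.swap_apply_self _ _ z)
    · rw [hd.support_mul, Equiv.Perm.support_swap hne, h2, show 2 * (k + 1) = 2 * k + 1 + 1 by ring,
        Finset.range_add_one, Finset.range_add_one]
      ext z
      simp only [Finset.mem_union, Finset.mem_image, Finset.mem_insert, Finset.mem_singleton]
      grind
    · intro z
      rcases disjoint_apply hd z with ⟨e, -⟩ | ⟨e, -⟩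
      · rw [e]
        exact h3 z
      · rw [e]
        by_cases hz1 : z = f (2 * k)
        · subst hz1
          right; left
          rw [Equiv.swap_apply_left, hf]
        · by_cases hz2 : z = f (2 * k + 1)
          · subst hz2
            right; right
            rw [Equiv.swap_apply_right, hf]
          · left
            exact Equiv.swap_apply_of_ne_of_ne hz1 hz2

lemma pow_inj_of_isCycle (hc : c.IsCycle) {x : V} (hx : c x ≠ x) {i j : ℕ}
    (hi : i < c.support.card) (hj : j < c.support.card) (h : (c ^ i) x = (c ^ j) x) : i = j := by
  have := (iterate_support_nodup hc hx).getElem_inj_iff (i := i) (j := j)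
    (hi := by simpa using hi) (hj := by simpa using hj)
  rw [List.getElem_iterate, List.getElem_iterate, Equiv.Perm.iterate_eq_pow,
    Equiv.Perm.iterate_eq_pow] at this
  exact this.1 h

lemma exists_matching_of_even_cycle (hc : c.IsCycle) (he : Even c.support.card) :
    ∃ ρ : Equiv.Perm V, Function.Involutive ρ ∧ ρ.support = c.support ∧
      ∀ z, ρ z = z ∨ ρ z = c z ∨ c (ρ z) = z := by
  obtain ⟨x, hx, -⟩ := id hc
  obtain ⟨k, hk⟩ := he
  have hinj : ∀ i < 2 * k, ∀ j < 2 * k, (c ^ i) x = (c ^ j) x → i = j := fun i hi j hj h =>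
    pow_inj_of_isCycle hc hx (by omega) (by omega) h
  obtain ⟨ρ, h1, h2, h3⟩ := exists_pairing c (fun j => (c ^ j) x)
    (fun j => by rw [pow_succ', Equiv.Perm.mul_apply]) k hinj
  refine ⟨ρ, h1, ?_, h3⟩
  rw [h2]
  refine Finset.eq_of_subset_of_card_le ?_ ?_
  · intro z hz
    obtain ⟨i, -, rfl⟩ := Finset.mem_image.1 hz
    rw [Equiv.Perm.pow_apply_mem_support]
    exact Equiv.Perm.mem_support.2 hx
  · rw [Finset.card_image_of_injOn, Finset.card_range]
    · omega
    · intro i hi j hj h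
      exact hinj i (by simpa using hi) j (by simpa using hj) h

lemma exists_matching_of_odd_cycle (hc : c.IsCycle) (ho : Odd c.support.card) {x : V}
    (hx : c x ≠ x) :
    ∃ ρ : Equiv.Perm V, Function.Involutive ρ ∧ ρ.support = c.support.erase x ∧
      ∀ z, ρ z = z ∨ ρ z = c z ∨ c (ρ z) = z := by
  obtain ⟨k, hk⟩ := ho
  have hinj : ∀ i < 2 * k, ∀ j < 2 * k, (c ^ (i + 1)) x = (c ^ (j + 1)) x → i = j :=
    fun i hi j hj h => by
      have := pow_inj_of_isCycle hc hx (by omega) (by omega) h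
      omega
  obtain ⟨ρ, h1, h2, h3⟩ := exists_pairing c (fun j => (c ^ (j + 1)) x)
    (fun j => by rw [pow_succ', Equiv.Perm.mul_apply]) k hinj
  refine ⟨ρ, h1, ?_, h3⟩
  rw [h2]
  refine Finset.eq_of_subset_of_card_le ?_ ?_
  · intro z hz
    obtain ⟨i, hi, rfl⟩ := Finset.mem_image.1 hz
    rw [Finset.mem_range] at hi
    rw [Finset.mem_erase, Equiv.Perm.pow_apply_mem_support]
    refine ⟨fun h => ?_, Equiv.Perm.mem_support.2 hx⟩
    have := pow_inj_of_isCycle hc hx (i := i + 1) (j := 0) (by omega) (by omega) h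
    omega
  · rw [Finset.card_image_of_injOn, Finset.card_range,
      Finset.card_erase_of_mem (Equiv.Perm.mem_support.2 hx)]
    · omega
    · intro i hi j hj h
      exact hinj i (by simpa using hi) j (by simpa using hj) h

lemma Graphical.of_steps {ρ : Equiv.Perm V} (hc : Graphical G c)
    (h : ∀ z, ρ z = z ∨ ρ z = c z ∨ c (ρ z) = z) : Graphical G ρ := by
  intro z hz
  rcases h z with e | e | e
  · exact absurd e hz
  · rw [e] at hz ⊢
    exact hc z hz
  · have := hc (ρ z) (by rw [e]; exact Ne.symm hz)
    rw [e] at this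
    exact this.symm

/-- Given a perfect matching `m` of the graph and a matching `τ` missing exactly `C` and one
further vertex `v`, the missed vertex can be moved along the alternating path of `m` and `τ`
until its `m`-partner lies in `C`. Each step replaces an edge of `τ` by an edge of `m`. -/
lemma exists_exposed_near (hi : Function.Involutive m) (hne : ∀ x, m x ≠ x)
    (hG : Graphical G m) (C : Finset V) (N : ℕ) : ∀ (v : V) (τ : Equiv.Perm V), v ∉ C →
    Function.Involutive τ → Graphical G τ → (∀ z, τ z ≠ z ↔ z ∉ C ∧ z ≠ v) →
    (Finset.univ.filter fun z => τ z ≠ m z).card ≤ N →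
    ∃ (v : V) (τ : Equiv.Perm V), v ∉ C ∧ Function.Involutive τ ∧ Graphical G τ ∧
      (∀ z, τ z ≠ z ↔ z ∉ C ∧ z ≠ v) ∧ m v ∈ C := by
  induction N with
  | zero =>
    intro v τ hv _ _ hs hN
    exfalso
    rw [Nat.le_zero, Finset.card_eq_zero] at hN
    have hfix : τ v = v := by
      by_contra h
      exact ((hs v).1 h).2 rfl
    have : v ∈ Finset.univ.filter fun z => τ z ≠ m z := by simp [hfix, (hne v).symm]
    rw [hN] at this
    simp at this
  | succ N ih =>
    intro v τ hv hτ hτG hs hN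
    by_cases hmv : m v ∈ C
    · exact ⟨v, τ, hv, hτ, hτG, hs, hmv⟩
    have hfix : τ v = v := by
      by_contra h
      exact ((hs v).1 h).2 rfl
    have hu : τ (m v) ≠ m v := (hs _).2 ⟨hmv, hne v⟩
    -- `u` is the partner of `v` in `m`, and `w` the partner of `u` in `τ`
    set u := m v with hudef
    have hmu : m u = v := by rw [hudef, hi v]
    set w := τ u with hwdef
    have hτw : τ w = u := hτ u
    have huv : u ≠ v := hne v
    have hwv : w ≠ v := fun h => huv (by rw [← hτw, h, hfix])
    have hwC : w ∉ C := ((hs w).1 (by rw [hτw]; exact Ne.symm hu)).1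
    let τ' : Equiv.Perm V := Equiv.swap v w * τ * Equiv.swap v w
    have e1 : τ' v = u := by
      simp only [τ', Equiv.Perm.mul_apply, Equiv.swap_apply_left, hτw]
      exact Equiv.swap_apply_of_ne_of_ne huv (Ne.symm hu)
    have e2 : τ' u = v := by
      simp only [τ', Equiv.Perm.mul_apply, Equiv.swap_apply_of_ne_of_ne huv (Ne.symm hu)]
      rw [← hwdef, Equiv.swap_apply_right]
    have e3 : τ' w = w := by
      simp only [τ', Equiv.Perm.mul_apply, Equiv.swap_apply_right, hfix, Equiv.swap_apply_left]
    have e4 : ∀ z, z ≠ v → z ≠ u → z ≠ w → τ' z = τ z := by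
      intro z h1 h2 h3
      simp only [τ', Equiv.Perm.mul_apply, Equiv.swap_apply_of_ne_of_ne h1 h3]
      refine Equiv.swap_apply_of_ne_of_ne (fun h => h1 ?_) (fun h => h2 ?_)
      · rw [← hτ z, h, hfix]
      · rw [← hτ z, h, hτw]
    have hadj : G.Adj v u := hG v (hne v)
    refine ih w τ' hwC ?_ ?_ ?_ ?_
    · intro z
      simp only [τ', Equiv.Perm.mul_apply, Equiv.swap_apply_self, hτ _]
    · intro z hz
      by_cases h1 : z = v
      · rw [h1, e1]; exact hadj
      by_cases h2 : z = u
      · rw [h2, e2]; exact hadj.symm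
      by_cases h3 : z = w
      · rw [h3, e3] at hz; exact absurd rfl hz
      rw [e4 z h1 h2 h3] at hz ⊢
      exact hτG z hz
    · intro z
      by_cases h1 : z = v
      · rw [h1, e1]; simp [huv, hv, Ne.symm hwv]
      by_cases h2 : z = u
      · rw [h2, e2]; simp [Ne.symm huv, hmv, Ne.symm hu]
      by_cases h3 : z = w
      · rw [h3, e3]; simp
      rw [e4 z h1 h2 h3, hs]
      simp [h1, h3]
    · have hlt : (Finset.univ.filter fun z => τ' z ≠ m z) ⊂
          (Finset.univ.filter fun z => τ z ≠ m z) := by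
        rw [Finset.ssubset_iff_of_subset]
        · refine ⟨v, ?_, ?_⟩
          · simp only [Finset.mem_filter, Finset.mem_univ, true_and, hfix]
            exact Ne.symm huv
          · simp only [Finset.mem_filter, Finset.mem_univ, true_and, e1]
            simp [hudef]
        · intro z hz
          simp only [Finset.mem_filter, Finset.mem_univ, true_and] at hz ⊢
          by_cases h1 : z = v
          · rw [h1, hfix]; exact Ne.symm huv
          by_cases h2 : z = u
          · rw [h2, e2, hmu] at hz; exact absurd rfl hz
          by_cases h3 : z = w
          · rw [h3, hτw]
            intro h
            exact hwv (by rw [← hmu, h, hi w])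
          rwa [e4 z h1 h2 h3] at hz
      have := Finset.card_lt_card hlt
      omega

end Matchings

/-! ### Pegs and the diagonal cofactors -/

section Pegs

variable {V : Type*} [Fintype V] [DecidableEq V] {G : SimpleGraph V} {A : Matrix V V ℂ}
  {σ τ c d m : Equiv.Perm V}

lemma card_even_of_isPM {M : Finset (Sym2 V)} (hM : IsPM G M) : Even (Fintype.card V) := by
  obtain ⟨m, h1, h2, -⟩ := exists_involution_of_isPM hM
  have h : m.support = Finset.univ := by
    ext x
    simpa using h2 x
  simpa [h] using (sign_involutive h1).1

lemma not_involutive_of_erase {M : Finset (Sym2 V)} (hM : IsPM G M) {v : V}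
    (hs : σ.support = Finset.univ.erase v) : ¬ Function.Involutive σ := by
  intro h
  have h1 := (sign_involutive h).1
  have h2 := card_even_of_isPM hM
  have h3 : 0 < Fintype.card V := Fintype.card_pos_iff.2 ⟨v⟩
  rw [hs, Finset.card_erase_of_mem (Finset.mem_univ v), Finset.card_univ] at h1
  rw [Nat.even_iff] at h1 h2
  omega

/-- If the odd cycle `p` has a single peg `{x, v}` relative to a perfect matching, then `p`
together with the matching edges disjoint from `p` and `v` is a good permutation. -/
lemma exists_good_of_peg (hA : ThreeColored G A) {u : V} (p : G.Walk u u) (hp : p.IsCycle)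
    (hodd : Odd p.length) (hw : walkWeight A p ∈ ({1, -1} : Set ℂ)) {M : Finset (Sym2 V)}
    (hM : IsPM G M) (hpeg : pegCount p M = 1) :
    ∃ (v : V) (σ : Equiv.Perm V), σ.support = Finset.univ.erase v ∧ Good G A σ := by
  obtain ⟨c, hc, hcG, hcu, hcs, hcard, hcw⟩ := exists_perm_of_walk A p hp
  obtain ⟨m, hi, hne, hmG, hmM, hmM'⟩ := exists_involution_of_isPM hM
  obtain ⟨e₀, he₀⟩ := Set.ncard_eq_one.1 hpeg
  have huniq : ∀ z, z ∈ p.support → m z ∉ p.support → s(z, m z) = e₀ := by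
    intro z hz hz'
    have : s(z, m z) ∈ {e : Sym2 V | e ∈ M ∧ IsPeg p e} :=
      ⟨hmM z, z, m z, rfl, Or.inr ⟨hz, hz'⟩⟩
    rwa [he₀] at this
  have hmem : e₀ ∈ {e : Sym2 V | e ∈ M ∧ IsPeg p e} := by
    rw [he₀]
    rfl
  obtain ⟨hM₀, x, y, rfl, h⟩ := hmem
  rcases h with ⟨hx, hy, -⟩ | ⟨hx, hy⟩
  · -- if the peg were a chord, the matching would pair up the vertices of an odd cycle
    exfalso
    obtain ⟨τ, h1, h2, h3⟩ := exists_restrict hi {z | z ∈ p.support} (by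
      intro z hz
      by_contra hz'
      rcases Sym2.eq_iff.1 (huniq z hz hz') with ⟨-, e⟩ | ⟨-, e⟩
      · exact hz' (by rw [e]; exact hy)
      · exact hz' (by rw [e]; exact hx))
    have hs : τ.support = c.support := by
      ext z
      rw [Equiv.Perm.mem_support, Equiv.Perm.mem_support, ← hcs]
      by_cases hz : z ∈ p.support
      · simp [hz, h2 z hz, hne z]
      · simp [hz, h3 z hz]
    have := (sign_involutive h1).1
    rw [hs, hcard] at this
    exact (Nat.not_even_iff_odd.2 hodd) this
  · have hmx : m x = y := by
      have := hmM' _ hM₀ x (by simp)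
      exact (Sym2.congr_right.1 this).symm
    obtain ⟨τ, h1, h2, h3⟩ := exists_restrict hi {z | z ∉ p.support ∧ z ≠ y} (by
      rintro z ⟨hz, hzy⟩
      refine ⟨fun hz' => ?_, fun h => ?_⟩
      · have := huniq (m z) hz' (by rwa [hi z])
        rw [hi z] at this
        rcases Sym2.eq_iff.1 this with ⟨-, e⟩ | ⟨-, e⟩
        · exact hzy e
        · exact hz (by rw [e]; exact hx)
      · exact hz (by rw [← hi z, h, ← hmx, hi x]; exact hx))
    have hd : c.Disjoint τ := by
      intro z
      by_cases hz : z ∈ p.support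
      · exact Or.inr (h3 z fun h => h.1 hz)
      · left
        by_contra h
        exact hz ((hcs z).2 h)
    have hτG : Graphical G τ := by
      intro z hz
      by_cases h : z ∈ {z | z ∉ p.support ∧ z ≠ y}
      · rw [h2 z h]
        exact hmG z (hne z)
      · exact absurd (h3 z h) hz
    refine ⟨y, c * τ, ?_, Good.mul hd ((good_isCycle_iff hc).2 ⟨hcG, ?_⟩)
      (good_of_involutive hA hτG h1)⟩
    · ext z
      rw [hd.support_mul, Finset.mem_union, Equiv.Perm.mem_support, Equiv.Perm.mem_support, ← hcs]
      simp only [Finset.mem_erase, Finset.mem_univ, and_true]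
      by_cases hz : z ∈ p.support
      · simp only [hz, true_or, true_iff]
        rintro rfl
        exact hy hz
      · by_cases hzy : z = y
        · have := h3 z (fun h => h.2 hzy)
          simp [hzy] at this ⊢
          exact ⟨hy, this⟩
        · simp [hz, hzy, h2 z ⟨hz, hzy⟩, hne z]
    · rw [hcw]
      rcases hw with e | e <;> rw [e] <;> simp [Complex.ext_iff]

/-- A good permutation missing one vertex of a graph with a perfect matching yields a real odd
cycle with a single peg. -/
lemma exists_peg_of_good (hA : ThreeColored G A) (hexc : AtMostOneReal G A)
    {M : Finset (Sym2 V)} (hM : IsPM G M) {v : V} (hs : σ.support = Finset.univ.erase v)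
    (hg : Good G A σ) :
    ∃ (u : V) (Γ : G.Walk u u), Γ.IsCycle ∧ Odd Γ.length ∧
        walkWeight A Γ ∈ ({1, -1} : Set ℂ) ∧ ∃ M, IsPM G M ∧ pegCount Γ M = 1 := by
  have hni := not_involutive_of_erase hM hs
  have hev := card_even_of_isPM hM
  have hpos : 0 < Fintype.card V := Fintype.card_pos_iff.2 ⟨v⟩
  simp only [Function.Involutive, not_forall] at hni
  obtain ⟨u, hu⟩ := hni
  obtain ⟨c, τ, rfl, hd, hc, hcu, hcg, hτg, hτi⟩ := hg.exists_split hexc hu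
  have hodd : Odd c.support.card := by
    have h1 := (sign_involutive hτi).1
    have h2 := hd.card_support_mul
    rw [hs, Finset.card_erase_of_mem (Finset.mem_univ v), Finset.card_univ] at h2
    rw [Nat.even_iff] at h1 hev
    rw [Nat.odd_iff]
    omega
  obtain ⟨p, hp, hlen, hps, hpe, hpw⟩ := exists_walk_of_isCycle A hc hcg.1 hcu
  refine ⟨u, p, hp, by rwa [hlen], ?_, ?_⟩
  · have hw := ((good_isCycle_iff hc).1 hcg).2
    rw [hpw]
    rcases permWeight_mem hA hcg.1 with e | e | e | e
    · exact Or.inl e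
    · exact Or.inr e
    · exact absurd (Or.inl e) hw
    · exact absurd (Or.inr e) hw
  obtain ⟨m, hi, hne, hmG, -, -⟩ := exists_involution_of_isPM hM
  have hsup : ∀ z, (c z ≠ z ∨ τ z ≠ z) ↔ z ≠ v := fun z => by
    rw [← Equiv.Perm.mem_support, ← Equiv.Perm.mem_support, ← Finset.mem_union,
      ← hd.support_mul, hs]
    simp
  have hvC : v ∉ c.support := fun h =>
    (hsup v).1 (Or.inl (Equiv.Perm.mem_support.1 h)) rfl
  have hτs : ∀ z, τ z ≠ z ↔ z ∉ c.support ∧ z ≠ v := by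
    intro z
    have h1 := hsup z
    have h2 := hd z
    rw [Equiv.Perm.mem_support]
    tauto
  clear hs hsup hg hu hd
  obtain ⟨v, τ, hv, hτi, hτG, hτs, hmv⟩ :=
    exists_exposed_near hi hne hmG c.support _ v τ hvC hτi hτg.1 hτs le_rfl
  -- the new perfect matching: `τ` outside the cycle, `ρ` along the edges of the cycle other
  -- than at `x`, and the edge `{x, v}`, which is the only peg
  set x := m v with hx
  have hxC := Equiv.Perm.mem_support.1 hmv
  obtain ⟨ρ, hρi, hρs, hρc⟩ := exists_matching_of_odd_cycle hc hodd hxC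
  have hρs' : ∀ z, ρ z ≠ z ↔ z ∈ c.support ∧ z ≠ x := fun z => by
    rw [← Equiv.Perm.mem_support, hρs, Finset.mem_erase, and_comm]
  have hxv : x ≠ v := hne v
  have hd1 : ρ.Disjoint τ := by
    intro z
    by_contra! h
    exact ((hτs z).1 h.2).1 ((hρs' z).1 h.1).1
  have hd2 : (ρ * τ).Disjoint (Equiv.swap x v) := by
    rw [Equiv.Perm.disjoint_iff_disjoint_support, Equiv.Perm.support_swap hxv, hd1.support_mul,
      Finset.disjoint_right]
    intro z hz
    simp only [Finset.mem_insert, Finset.mem_singleton] at hz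
    rw [Finset.mem_union, Equiv.Perm.mem_support, Equiv.Perm.mem_support, hρs', hτs]
    rcases hz with rfl | rfl
    · tauto
    · tauto
  have hadj : G.Adj x v := (hmG v hxv).symm
  have hswap : Graphical G (Equiv.swap x v) := by
    intro z hz
    by_cases h1 : z = x
    · rw [h1, Equiv.swap_apply_left]; exact hadj
    by_cases h2 : z = v
    · rw [h2, Equiv.swap_apply_right]; exact hadj.symm
    exact absurd (Equiv.swap_apply_of_ne_of_ne h1 h2) hz
  have hμi : Function.Involutive (ρ * τ * Equiv.swap x v : Equiv.Perm V) :=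
    involutive_mul hd2 (involutive_mul hd1 hρi hτi) fun z => Equiv.swap_apply_self _ _ z
  have hμG : Graphical G (ρ * τ * Equiv.swap x v) :=
    ((hcg.1.of_steps hρc).mul hd1 hτG).mul hd2 hswap
  have hμx : (ρ * τ * Equiv.swap x v) x = v := by
    have h1 : τ v = v := by
      by_contra h
      exact ((hτs v).1 h).2 rfl
    have h2 : ρ v = v := by
      by_contra h
      exact hv ((hρs' v).1 h).1
    simp [h1, h2]
  have hμC : ∀ z ∈ c.support, z ≠ x → (ρ * τ * Equiv.swap x v) z = ρ z := by
    intro z hz hzx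
    have h1 : τ z = z := by
      by_contra h
      exact ((hτs z).1 h).1 hz
    have h2 : z ≠ v := fun h => hv (h ▸ hz)
    simp [Equiv.swap_apply_of_ne_of_ne hzx h2, h1]
  have hμne : ∀ z, (ρ * τ * Equiv.swap x v) z ≠ z := by
    intro z
    rw [← Equiv.Perm.mem_support, hd2.support_mul, hd1.support_mul, Equiv.Perm.support_swap hxv]
    simp only [Finset.mem_union, Finset.mem_insert, Finset.mem_singleton]
    rw [Equiv.Perm.mem_support, Equiv.Perm.mem_support, hρs', hτs]
    tauto
  refine ⟨_, isPM_of_involution hμi hμne hμG, ?_⟩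
  generalize ρ * τ * Equiv.swap x v = μ at *
  rw [pegCount, Set.ncard_eq_one]
  refine ⟨s(x, v), ?_⟩
  ext e
  constructor
  · rintro ⟨he, a, b, rfl, h⟩
    obtain ⟨z, -, hz⟩ := Finset.mem_image.1 he
    have hb : b = μ a := by
      rcases Sym2.eq_iff.1 hz with ⟨rfl, rfl⟩ | ⟨rfl, rfl⟩
      · rfl
      · rw [hμi]
    have ha : a ∈ c.support := by
      rw [Equiv.Perm.mem_support, ← hps]
      tauto
    by_cases hax : a = x
    · rw [hb, hax, hμx]
      rfl
    · exfalso
      rw [hμC a ha hax] at hb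
      have hba : ρ a ≠ a := (hρs' a).2 ⟨ha, hax⟩
      have hbC : b ∈ p.support := by
        rw [hps, ← Equiv.Perm.mem_support, hb]
        exact ((hρs' (ρ a)).1 (by simpa using hba)).1
      have hedge : s(a, b) ∈ p.edges := by
        rw [hpe]
        rcases hρc a with e | e | e
        · exact absurd e hba
        · exact ⟨a, Equiv.Perm.mem_support.1 ha, by rw [hb, e]⟩
        · exact ⟨b, (hps b).1 hbC, by rw [hb, e, Sym2.eq_swap]⟩
      tauto
  · rintro rfl
    refine ⟨Finset.mem_image.2 ⟨x, Finset.mem_univ x, by rw [hμx]⟩, x, v, rfl, Or.inr ⟨?_, ?_⟩⟩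
    · rw [hps]
      exact hxC
    · rw [hps, ← Equiv.Perm.mem_support]
      exact hv

lemma hasPM_of_full_involution (hi : Function.Involutive τ) (hG : Graphical G τ)
    (hs : τ.support = Finset.univ) : HasPM G :=
  ⟨_, isPM_of_involution hi (fun x => by rw [← Equiv.Perm.mem_support, hs]; simp) hG⟩

/-- Without a perfect matching, the determinant is carried by an odd real cycle `c` plus a
matching of the rest; deleting a vertex of `c` then leaves a graph with a perfect matching and
an even number of vertices, so that only matchings contribute to the corresponding cofactor,
which is therefore nonzero. -/
lemma hasPM_of_diag (hA : ThreeColored G A) (hexc : AtMostOneReal G A) (hdet : A.det ≠ 0)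
    (hdiag : ∀ v : V, A⁻¹ v v = 0) : HasPM G := by
  have hdet' := hdet
  rw [det_eq_sum hA] at hdet'
  obtain ⟨σ, hs, hg⟩ := exists_good_of_sum_ne_zero hdet'
  by_cases hi : Function.Involutive σ
  · exact hasPM_of_full_involution hi hg.1 hs
  simp only [Function.Involutive, not_forall] at hi
  obtain ⟨x, hx⟩ := hi
  obtain ⟨c, τ, rfl, hd, hc, hcx, hcg, hτg, hτi⟩ := hg.exists_split hexc hx
  rcases Nat.even_or_odd c.support.card with he | ho
  · obtain ⟨ρ, h1, h2, h3⟩ := exists_matching_of_even_cycle hc he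
    have hd' : ρ.Disjoint τ := by
      rw [Equiv.Perm.disjoint_iff_disjoint_support, h2]
      exact Equiv.Perm.disjoint_iff_disjoint_support.1 hd
    refine hasPM_of_full_involution (involutive_mul hd' h1 hτi)
      ((hcg.1.of_steps h3).mul hd' hτg.1) ?_
    rw [hd'.support_mul, h2, ← hd.support_mul, hs]
  · exfalso
    have hx1 : c x ≠ x := fun h => hcx (by rw [h, h])
    obtain ⟨ρ, h1, h2, h3⟩ := exists_matching_of_odd_cycle hc ho hx1
    have hdisj := Equiv.Perm.disjoint_iff_disjoint_support.1 hd
    have hd' : ρ.Disjoint τ := by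
      rw [Equiv.Perm.disjoint_iff_disjoint_support, h2]
      exact Finset.disjoint_of_subset_left (Finset.erase_subset _ _) hdisj
    have hsup : (ρ * τ).support = Finset.univ.erase x := by
      rw [hd'.support_mul, h2, ← hs, hd.support_mul, Finset.erase_union_distrib,
        Finset.erase_eq_of_notMem (s := τ.support)]
      exact Finset.disjoint_left.1 hdisj (Equiv.Perm.mem_support.2 hx1)
    have hinv := involutive_mul hd' h1 hτi
    have hgood := good_of_involutive hA ((hcg.1.of_steps h3).mul hd' hτg.1) hinv
    have h0 := (inv_diag_eq_zero_iff hdet x).1 (hdiag x)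
    rw [adjugate_eq_sum hA] at h0
    refine sum_ne_zero_of_good hA hgood hsup (fun π hπ hπs => ?_) h0
    -- a parity count: the odd cycle cannot occur when an even number of vertices is moved
    have hπi : Function.Involutive π := by
      by_contra hni
      simp only [Function.Involutive, not_forall] at hni
      obtain ⟨y, hy⟩ := hni
      obtain ⟨c', τ', rfl, hd'', hc', hcy, hcg', -, hτi'⟩ := hπ.exists_split hexc hy
      have e := (permTerm_eq_of_real hA hexc hc hcg hcx hc' hcg' hcy).2
      have h4 := (sign_involutive hτi').1
      have h5 := (sign_involutive hinv).1
      have h6 := hd''.card_support_mul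
      rw [hsup, ← hπs, h6, e] at h5
      rw [Nat.odd_iff] at ho
      rw [Nat.even_iff] at h4 h5
      omega
    rw [permTerm_involutive hA hπ.1 hπi, permTerm_involutive hA hgood.1 hinv, hπs, hsup]

end Pegs

/-- For a non-singular connected bicyclic 3-colored digraph in which
every cycle with at most one exception has weight `±i`: the diagonal of `A⁻¹` is zero
iff `B` has a perfect matching and no odd cycle of weight `±1` has exactly one peg
relative to some perfect matching. -/
theorem stmt15 {V : Type*} [Fintype V] [DecidableEq V] (B : SimpleGraph V)
    (A : Matrix V V ℂ) (hA : ThreeColored B A) (hB : Bicyclic V B)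
    (hexc : ∀ (u v : V) (c : B.Walk u u) (d : B.Walk v v), c.IsCycle → d.IsCycle →
      walkWeight A c ∉ ({Complex.I, -Complex.I} : Set ℂ) →
      walkWeight A d ∉ ({Complex.I, -Complex.I} : Set ℂ) → SameCycle c d)
    (hdet : A.det ≠ 0) :
    (∀ v : V, A⁻¹ v v = 0) ↔
      (HasPM B ∧ ¬ ∃ (u : V) (Γ : B.Walk u u), Γ.IsCycle ∧ Odd Γ.length ∧
        walkWeight A Γ ∈ ({1, -1} : Set ℂ) ∧ ∃ M, IsPM B M ∧ pegCount Γ M = 1) := by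
  have hexc' : AtMostOneReal B A := hexc
  constructor
  · intro hdiag
    have hPM : HasPM B := hasPM_of_diag hA hexc' hdet hdiag
    refine ⟨hPM, ?_⟩
    rintro ⟨u, Γ, hΓ, hodd, hw, M, hM, hpeg⟩
    obtain ⟨v, σ, hs, hg⟩ := exists_good_of_peg hA Γ hΓ hodd hw hM hpeg
    obtain ⟨M, hM⟩ := hPM
    have h0 := (inv_diag_eq_zero_iff hdet v).1 (hdiag v)
    rw [adjugate_eq_sum hA] at h0
    refine sum_ne_zero_of_good hA hg hs (fun τ hτ hτs => ?_) h0
    exact permTerm_eq_of_not_involutive hA hexc' hτ hg (hτs.trans hs.symm)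
      (not_involutive_of_erase hM hτs) (not_involutive_of_erase hM hs)
  · rintro ⟨⟨M, hM⟩, hno⟩ v
    rw [inv_diag_eq_zero_iff hdet, adjugate_eq_sum hA]
    by_contra hne
    obtain ⟨σ, hs, hg⟩ := exists_good_of_sum_ne_zero hne
    exact hno (exists_peg_of_good hA hexc' hM hs hg)
end

section
/- Let (B, A) be a 3-colored digraph where B is a connected bicyclic graph such that every cycle of B, with at most one exception, has weight in {i, −i}. Then det A ∈ {1, −1} if and only if one of the following holds: (1) B has a unique perfect matching; (2) B is of θ-type, B has a perfect matching, every cycle of B is independent, and there exists a cycle Γ of B with w(Γ)·(−1)^{|Γ|/2} = 1. -/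
/-!
The Leibniz expansion of `det A` only involves permutations `σ` moving every vertex along an edge.
Orbits of size two of such a `σ` have weight `1`, and longer orbits are cycles of `B`.

If some orbit has weight `±i`, reversing it conjugates, hence negates, its weight while the sign of
the permutation is unchanged; so these permutations cancel in pairs (`sum_imag`). What remains is
the set `mates B` of perfect matchings (fixed-point-free involutions along edges), each contributing
`(-1)^(n/2)`, and a set `realPerms B A` of permutations with an orbit of length at least three and
no orbit of weight `±i`. As at most one cycle `Γ` has real weight, every element of `realPerms B A`
traverses `Γ` in one of the two directions and is a matching off `Γ` (`realPerms_orb`); all of them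
contribute the same sign, equal to `-(-1)^(n/2) w(Γ) (-1)^(|Γ|/2)` when `n` is even
(`detTerm_eq`, `detTerm_real_even`). So, with `m = #(mates B)` and `r = #(realPerms B A)`, and
`n` even,
`det A = (-1)^(n/2) (m - r w(Γ) (-1)^(|Γ|/2))`.

Here `r` is even, by inverting permutations (`even_realPerms`), and `r ≤ m`, because keeping every
other edge of `Γ` turns these permutations injectively into matchings (`card_realPerms_le`). The
cycle space of a bicyclic graph has four elements and the difference of two matchings lies in it,
so `m ≤ 4` (`card_mates_le`). If `det A = ±1` then `m` is odd, thus `m = 1` or `m = 3`, and for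
`m = 3` the sign `w(Γ) (-1)^(|Γ|/2)` must be `1`. Conversely `m = 1` forces `r = 0`, while `m = 3`
together with a real independent cycle of sign `1` forces `r = 2` and `det A = ±(3 - 2)`.

It remains to see that `m = 3` exactly when `B` is of θ-type, has a perfect matching and all its
cycles are independent. If `m = 3`, the pairwise differences of the matchings are all three nonzero
elements of the cycle space, so that every cycle is a difference of two matchings and is independent
(`indep_of_three`), and two cycles share an edge (`theta_of_three`). Conversely independent cycles
are differences of matchings, which gives `m ≥ 3` (`three_of_theta`), and `m = 4` would make the
cycles edge-disjoint (`infinity_of_four`).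
-/

open SimpleGraph

/-! ### Cycles as orbits of permutations -/

section Aux
open Finset Equiv

variable {V : Type*}

/-- The permutation `σ` moves along the cycle `c`: it permutes the vertices of `c` cyclically, each
vertex going to its successor. Edges and weight of `c` are then read off from `σ`. -/
structure Traces [DecidableEq V] {G : SimpleGraph V} {v : V} (c : G.Walk v v) (σ : Perm V) :
    Prop where
  cycleOn : σ.IsCycleOn (c.support.toFinset : Set V)
  three_le : 3 ≤ c.support.toFinset.card
  card_eq : c.support.toFinset.card = c.length
  edges_eq : c.edges.toFinset = c.support.toFinset.image (fun u => s(u, σ u))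
  weight_eq : ∀ A : Matrix V V ℂ, walkWeight A c = ∏ u ∈ c.support.toFinset, A u (σ u)

/-- The walk `v, σ v, σ² v, …, σᵏ v`. -/
theorem perm_walk (G : SimpleGraph V) (σ : Perm V) (h : ∀ v, G.Adj v (σ v)) (v : V) (k : ℕ) :
    ∃ p : G.Walk v ((σ ^ k) v), p.darts.map (fun d => d.toProd) =
      (List.range k).map (fun i => ((σ ^ i) v, (σ ^ (i + 1)) v)) := by
  induction k with
  | zero => exact ⟨Walk.nil, rfl⟩
  | succ k ih =>
    obtain ⟨p, hp⟩ := ih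
    have e : (σ ^ (k + 1)) v = σ ((σ ^ k) v) := by rw [pow_succ', Perm.mul_apply]
    have := h ((σ ^ k) v)
    rw [← e] at this
    refine ⟨p.concat this, ?_⟩
    rw [Walk.darts_concat, List.concat_eq_append, List.map_append, hp, List.range_succ,
      List.map_append]
    simp

theorem long_of_card {σ : Perm V} {S : Finset V} (hS : σ.IsCycleOn (S : Set V))
    (h3 : 3 ≤ S.card) {v : V} (hv : v ∈ S) : σ (σ v) ≠ v := by
  intro h
  have := (hS.pow_apply_eq hv (n := 2)).1 (by simpa [pow_two] using h)
  have := Nat.le_of_dvd (by norm_num) this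
  omega

theorem cycleOn_image [DecidableEq V] {σ : Perm V} {S : Finset V}
    (hS : σ.IsCycleOn (S : Set V)) {v : V} (hv : v ∈ S) :
    ((List.range S.card).map (fun i => (σ ^ i) v)).toFinset = S := by
  ext u
  simp only [List.mem_toFinset, List.mem_map, List.mem_range]
  constructor
  · rintro ⟨i, -, rfl⟩
    exact (hS.1.perm_pow i).mapsTo hv
  · intro hu
    exact hS.exists_pow_eq hv hu

theorem cycleOn_nodup {σ : Perm V} {S : Finset V}
    (hS : σ.IsCycleOn (S : Set V)) {v : V} (hv : v ∈ S) :
    ((List.range S.card).map (fun i => (σ ^ i) v)).Nodup := by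
  refine List.Nodup.map_on ?_ List.nodup_range
  intro i hi j hj h
  rw [hS.pow_apply_eq_pow_apply hv] at h
  exact Nat.ModEq.eq_of_lt_of_lt h (List.mem_range.1 hi) (List.mem_range.1 hj)

theorem toFinset_map_eq {α β : Type*} [DecidableEq α] [DecidableEq β] (f : α → β) (l : List α) :
    (l.map f).toFinset = l.toFinset.image f := by
  ext; simp

/-- An orbit with at least three elements of a permutation along edges of `G` is a cycle of `G`. -/
theorem exists_walk_of_perm [DecidableEq V] {G : SimpleGraph V} {σ : Perm V}
    (h : ∀ v, G.Adj v (σ v)) {S : Finset V} (hS : σ.IsCycleOn (S : Set V)) (h3 : 3 ≤ S.card)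
    {v : V} (hv : v ∈ S) :
    ∃ c : G.Walk v v, c.IsCycle ∧ c.support.toFinset = S ∧ Traces c σ := by
  have hk : (σ ^ S.card) v = v := (hS.pow_apply_eq hv).2 dvd_rfl
  have key := perm_walk G σ h v S.card
  rw [hk] at key
  obtain ⟨c, hc⟩ := key
  have hlen : c.length = S.card := by
    rw [← Walk.length_darts, ← List.length_map (f := fun d => d.toProd), hc]; simp
  have hprod : c.darts.map (fun d => d.toProd) =
      ((List.range S.card).map (fun i => (σ ^ i) v)).map (fun u => (u, σ u)) := by
    rw [hc, List.map_map]
    refine List.map_congr_left fun i _ => ?_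
    simp [pow_succ', Perm.mul_apply]
  have hedge : c.edges =
      ((List.range S.card).map (fun i => (σ ^ i) v)).map (fun u => s(u, σ u)) := by
    have := congrArg (List.map (fun x : V × V => s(x.1, x.2))) hprod
    rw [List.map_map, List.map_map] at this
    exact this
  have hnd := cycleOn_nodup hS hv
  have him := cycleOn_image hS hv
  have htail : c.support.tail = ((List.range S.card).map (fun i => (σ ^ i) v)).map σ := by
    rw [← Walk.map_snd_darts]
    have := congrArg (List.map (fun x : V × V => x.2)) hprod
    rw [List.map_map, List.map_map] at this
    exact this
  have hsupp : c.support.toFinset = S := by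
    rw [← Walk.cons_tail_support, htail, List.toFinset_cons, toFinset_map_eq, him]
    ext u
    simp only [mem_insert, mem_image]
    constructor
    · rintro (rfl | ⟨w, hw, rfl⟩)
      · exact hv
      · exact hS.apply_mem_iff.2 hw
    · intro hu
      refine Or.inr ⟨σ.symm u, ?_, by simp⟩
      have := hS.apply_mem_iff (x := σ.symm u)
      simp only [Equiv.apply_symm_apply] at this
      exact this.1 hu
  refine ⟨c, ?_, hsupp, ?_⟩
  · rw [Walk.isCycle_def]
    refine ⟨⟨?_⟩, ?_, ?_⟩
    · rw [hedge]
      refine List.Nodup.map_on ?_ hnd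
      intro a ha b hb hab
      have ha : a ∈ S := by rw [← him]; exact List.mem_toFinset.2 ha
      rcases Sym2.eq_iff.1 hab with ⟨h1, _⟩ | ⟨h1, h2⟩
      · exact h1
      · exact absurd (by rw [h2, ← h1]) (long_of_card hS h3 ha)
    · rintro rfl
      simp at hlen; omega
    · rw [htail]
      exact hnd.map σ.injective
  · refine ⟨by rwa [hsupp], by rwa [hsupp], by rw [hsupp, hlen], ?_, ?_⟩
    · rw [hsupp, hedge, toFinset_map_eq, him]
    · intro A
      have := congrArg (List.map (fun x : V × V => A x.1 x.2)) hprod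
      rw [List.map_map, List.map_map] at this
      rw [hsupp]
      refine (congrArg List.prod this).trans ?_
      refine Eq.trans ?_ (congrArg (fun T => ∏ u ∈ T, A u (σ u)) him)
      exact (List.prod_toFinset _ hnd).symm

/-- Every cycle is the orbit of a permutation. -/
theorem exists_perm_of_cycle [DecidableEq V] {G : SimpleGraph V} {v : V} {c : G.Walk v v}
    (hc : c.IsCycle) : ∃ σ : Perm V, Traces c σ := by
  set t := c.support.tail with ht
  have hnd : t.Nodup := hc.support_nodup
  have hlt : t.length = c.length := by simp [ht]
  have h3 : 3 ≤ c.length := hc.three_le_length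
  have hget : ∀ i (hi : i < t.length), t[i] = c.getVert (i + 1) := by
    intro i hi
    have : i + 1 ≤ c.length := by omega
    rw [c.getVert_eq_support_getElem this]
    simp [ht]
  have hst : c.support.toFinset = t.toFinset := by
    have : v ∈ t := by
      have := hget (c.length - 1) (by omega)
      rw [show c.length - 1 + 1 = c.length by omega, Walk.getVert_length] at this
      rw [← this]; exact List.getElem_mem _
    rw [← Walk.cons_tail_support, List.toFinset_cons]
    exact insert_eq_self.2 (List.mem_toFinset.2 this)
  have hstep : ∀ i < c.length, t.formPerm (c.getVert i) = c.getVert (i + 1) := by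
    intro i hi
    rcases i with _ | i
    · have h1 := hget (c.length - 1) (by omega)
      rw [show c.length - 1 + 1 = c.length by omega, Walk.getVert_length] at h1
      have h2 := List.formPerm_apply_getElem t hnd (c.length - 1) (by omega)
      rw [h1, hget] at h2
      rw [Walk.getVert_zero, h2]
      simp [hlt, show c.length - 1 + 1 = c.length by omega]
    · rw [← hget i (by omega), List.formPerm_apply_getElem _ hnd, hget]
      simp [hlt, Nat.mod_eq_of_lt hi]
  have hdart : ∀ d ∈ c.darts, d.toProd.2 = t.formPerm d.toProd.1 := by
    intro d hd
    obtain ⟨i, hi, rfl⟩ := List.getElem_of_mem hd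
    rw [Walk.darts_getElem_eq_getVert]
    simp only
    rw [hstep i (by simpa using hi)]
  have hfst : (c.darts.map (fun d => d.toProd.1)).Nodup := by
    have h1 : c.darts.map (fun d => t.formPerm d.toProd.1) = t := by
      refine Eq.trans ?_ (Walk.map_snd_darts c)
      exact List.map_congr_left fun d hd => (hdart d hd).symm
    have : ((c.darts.map (fun d => d.toProd.1)).map t.formPerm).Nodup := by
      rw [List.map_map]
      change (c.darts.map (fun d => t.formPerm d.toProd.1)).Nodup
      rwa [h1]
    exact this.of_map
  have hfs : (c.darts.map (fun d => d.toProd.1)).toFinset = c.support.toFinset := by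
    have h1 : (c.darts.map (fun d => d.toProd.1)) ++ [v] = c.support := Walk.map_fst_darts_append c
    refine eq_of_subset_of_card_le ?_ ?_
    · rw [← h1]; intro x hx; simp only [List.mem_toFinset] at hx ⊢
      exact List.mem_append_left _ hx
    · rw [List.toFinset_card_of_nodup hfst, hst, List.toFinset_card_of_nodup hnd, hlt]
      simp
  have hne : ∀ x, t ≠ [x] := by
    intro x hx
    rw [hx] at hlt; simp at hlt; omega
  refine ⟨t.formPerm, ?_, ?_, ?_, ?_, ?_⟩
  · rw [hst, List.coe_toFinset]
    exact hnd.isCycleOn_formPerm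
  · rw [hst, List.toFinset_card_of_nodup hnd]; omega
  · rw [hst, List.toFinset_card_of_nodup hnd]; omega
  · rw [← hfs, ← toFinset_map_eq, List.map_map]
    congr 1
    refine List.map_congr_left fun d hd => ?_
    simp only [Function.comp_apply]
    rw [← hdart d hd]; rfl
  · intro A
    unfold walkWeight
    rw [← hfs, List.prod_toFinset _ hfst, List.map_map]
    congr 1
    refine List.map_congr_left fun d hd => ?_
    simp only [Function.comp_apply]
    rw [← hdart d hd]

/-- The edge set of a closed walk as a vector over `𝔽₂`. -/
noncomputable def walkVec {G : SimpleGraph V} {v : V} (c : G.Walk v v) : Sym2 V → ZMod 2 :=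
  open Classical in fun e => if e ∈ c.edges then 1 else 0

theorem Traces.mem_edges [DecidableEq V] {G : SimpleGraph V} {v : V} {c : G.Walk v v} {σ : Perm V}
    (h : Traces c σ) {a b : V} :
    s(a, b) ∈ c.edges ↔ a ∈ c.support ∧ (b = σ a ∨ a = σ b) := by
  have h1 : s(a, b) ∈ c.edges ↔ s(a, b) ∈ c.edges.toFinset := by simp
  have hm : ∀ x, σ x ∈ c.support ↔ x ∈ c.support := fun x => by
    simpa using h.cycleOn.apply_mem_iff (x := x)
  rw [h1, h.edges_eq, mem_image]
  simp only [List.mem_toFinset, Sym2.eq_iff]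
  constructor
  · rintro ⟨u, hu, ⟨rfl, rfl⟩ | ⟨rfl, rfl⟩⟩
    · exact ⟨hu, Or.inl rfl⟩
    · exact ⟨(hm _).2 hu, Or.inr rfl⟩
  · rintro ⟨ha, rfl | rfl⟩
    · exact ⟨a, ha, Or.inl ⟨rfl, rfl⟩⟩
    · exact ⟨b, (hm _).1 ha, Or.inr ⟨rfl, rfl⟩⟩

theorem exists_edge_ne [DecidableEq V] {G : SimpleGraph V} {v : V} {c : G.Walk v v}
    (hc : c.IsCycle) {a : V} (ha : a ∈ c.support) (x : V) : ∃ b, b ≠ x ∧ s(a, b) ∈ c.edges := by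
  obtain ⟨σ, hσ⟩ := exists_perm_of_cycle hc
  have hlong : σ (σ (σ.symm a)) ≠ σ.symm a := by
    refine long_of_card hσ.cycleOn hσ.three_le ?_
    have := hσ.cycleOn.apply_mem_iff (x := σ.symm a)
    simpa [ha] using this
  rw [Equiv.apply_symm_apply] at hlong
  by_cases h : σ a = x
  · exact ⟨σ.symm a, fun h' => hlong (h.trans h'.symm), hσ.mem_edges.2 ⟨ha, Or.inr (by simp)⟩⟩
  · exact ⟨σ a, h, hσ.mem_edges.2 ⟨ha, Or.inl rfl⟩⟩

theorem walkVec_ne_zero {G : SimpleGraph V} {v : V} {c : G.Walk v v} {e : Sym2 V}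
    (he : e ∈ c.edges) : walkVec c ≠ 0 := by
  intro h
  have := congrFun h e
  simp [walkVec, he] at this

theorem walkVec_eq_iff [DecidableEq V] {G : SimpleGraph V} {v w : V} {c : G.Walk v v}
    {d : G.Walk w w} : walkVec c = walkVec d ↔ SameCycle c d := by
  unfold SameCycle
  rw [Finset.ext_iff, funext_iff]
  refine forall_congr' fun e => ?_
  unfold walkVec
  rw [List.mem_toFinset, List.mem_toFinset]
  by_cases h1 : e ∈ c.edges <;> by_cases h2 : e ∈ d.edges <;> simp [h1, h2]

end Aux

/-! ### The cycle space over `𝔽₂` -/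

section CycleSpace
open Finset Equiv

variable {V : Type*} [Fintype V]

/-- `z`, read as a set of edges of `G`, is an element of the cycle space of `G` over `𝔽₂`: it has
even degree at every vertex. -/
def InCycleSpace (G : SimpleGraph V) (z : Sym2 V → ZMod 2) : Prop :=
  (∀ e, e ∉ G.edgeSet → z e = 0) ∧ ∀ v, ∑ u, z s(v, u) = 0

theorem InCycleSpace.add {G : SimpleGraph V} {z w : Sym2 V → ZMod 2} (hz : InCycleSpace G z)
    (hw : InCycleSpace G w) : InCycleSpace G (z + w) := by
  refine ⟨fun e he => by simp [hz.1 e he, hw.1 e he], fun v => ?_⟩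
  simp [sum_add_distrib, hz.2 v, hw.2 v]

theorem zmod2_ne_zero {x : ZMod 2} (h : x ≠ 0) : x = 1 := by
  revert h; revert x; decide

theorem zmod2_add_self (x : ZMod 2) : x + x = 0 := by
  revert x; decide

theorem zfun_add_self {α : Type*} (x : α → ZMod 2) : x + x = 0 := funext fun _ => zmod2_add_self _

theorem zfun_add_eq {α : Type*} {x y z : α → ZMod 2} : x + y = z ↔ y = x + z := by
  constructor
  · rintro rfl; rw [← add_assoc, zfun_add_self, zero_add]
  · rintro rfl; rw [← add_assoc, zfun_add_self, zero_add]

theorem zfun_add_eq_zero {α : Type*} {x y : α → ZMod 2} : x + y = 0 ↔ x = y := by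
  rw [zfun_add_eq, add_zero, eq_comm]

/-- Every edge of an element of the cycle space lies on a cycle inside that element: otherwise it
would be a bridge, and the side of the bridge containing one of its ends would have odd total
degree. -/
theorem InCycleSpace.exists_cycle {G : SimpleGraph V} {z : Sym2 V → ZMod 2}
    (hz : InCycleSpace G z) {a b : V} (hab : z s(a, b) ≠ 0) :
    ∃ (u : V) (c : (fromEdgeSet {e | z e ≠ 0}).Walk u u), c.IsCycle ∧ s(a, b) ∈ c.edges := by
  classical
  set H := fromEdgeSet {e | z e ≠ 0} with hH
  have hdiag : ∀ v, z s(v, v) = 0 := fun v => hz.1 _ (by simp)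
  have hne : a ≠ b := by rintro rfl; exact hab (hdiag a)
  refine adj_and_reachable_delete_edges_iff_exists_cycle.1 ⟨?_, ?_⟩
  · rw [hH, fromEdgeSet_adj]; exact ⟨hab, hne⟩
  by_contra hr
  set S : Finset V := univ.filter (fun w => (H.deleteEdges {s(a, b)}).Reachable a w) with hS
  have haS : a ∈ S := by simp [hS]
  have hbS : b ∉ S := by simpa [hS] using hr
  have hcross : ∀ w ∈ S, ∀ u ∈ Sᶜ, z s(w, u) ≠ 0 → w = a ∧ u = b := by
    intro w hw u hu hzz
    rw [mem_compl] at hu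
    have hwu : w ≠ u := by rintro rfl; exact hu hw
    by_cases he : s(w, u) = s(a, b)
    · rcases Sym2.eq_iff.1 he with h | ⟨h1, h2⟩
      · exact h
      · subst h1; exact absurd hw hbS
    · exfalso
      apply hu
      rw [hS, mem_filter] at hw ⊢
      refine ⟨mem_univ _, hw.2.trans (Adj.reachable ?_)⟩
      rw [deleteEdges_adj]
      refine ⟨?_, by simpa using he⟩
      rw [hH, fromEdgeSet_adj]; exact ⟨hzz, hwu⟩
  have h0 : ∑ w ∈ S, ∑ u, z s(w, u) = 0 := sum_eq_zero fun w _ => hz.2 w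
  have h1 : ∑ w ∈ S, ∑ u ∈ S, z s(w, u) = 0 := by
    rw [← sum_product']
    refine sum_involution (fun p _ => (p.2, p.1)) ?_ ?_ ?_ ?_
    · rintro ⟨x, y⟩ _; simp only; rw [Sym2.eq_swap (a := y)]; exact zmod2_add_self _
    · rintro ⟨x, y⟩ _ hp hxy
      simp only [Prod.mk.injEq] at hxy
      rw [hxy.1] at hp; exact hp (hdiag _)
    · rintro ⟨x, y⟩ h; simp only [mem_product] at h ⊢; exact h.symm
    · rintro ⟨x, y⟩ _; rfl
  have h2 : ∑ w ∈ S, ∑ u ∈ Sᶜ, z s(w, u) = z s(a, b) := by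
    rw [sum_eq_single a, sum_eq_single b]
    · intro u hu hub
      by_contra hc; exact hub (hcross a haS u hu hc).2
    · intro h; exact absurd (mem_compl.2 hbS) h
    · intro w hw hwa
      refine sum_eq_zero fun u hu => ?_
      by_contra hc; exact hwa (hcross w hw u hu hc).1
    · intro h; exact absurd haS h
  simp_rw [← sum_add_sum_compl S] at h0
  rw [sum_add_distrib, h1, h2, zero_add] at h0
  exact hab h0

theorem support_le {G : SimpleGraph V} {z : Sym2 V → ZMod 2} (hz : InCycleSpace G z) :
    fromEdgeSet {e | z e ≠ 0} ≤ G := by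
  rw [fromEdgeSet_le]
  rintro e ⟨he, -⟩
  by_contra h
  exact he (hz.1 e h)

/-- The cycle space of a bicyclic graph has at most four elements: an element is determined by its
values on the two edges outside a spanning tree. -/
theorem card_cycleSpace [DecidableEq V] {G : SimpleGraph V} (hG : Bicyclic V G)
    (s : Finset (Sym2 V → ZMod 2)) (hs : ∀ z ∈ s, InCycleSpace G z) : s.card ≤ 4 := by
  classical
  obtain ⟨T, hTG, hT⟩ := hG.1.exists_isTree_le
  have hTc := hT.card_edgeFinset
  have hGc : G.edgeFinset.card = Fintype.card V + 1 := by
    rw [← hG.2, ← coe_edgeFinset, Set.ncard_coe_finset]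
  set D := G.edgeFinset \ T.edgeFinset with hD
  have hDc : D.card = 2 := by
    rw [hD, card_sdiff_of_subset (edgeFinset_mono hTG)]
    omega
  have hinj : Set.InjOn (fun (z : Sym2 V → ZMod 2) (e : D) => z e.1) (s : Set _) := by
    intro z hz w hw hzw
    have hzw' := (hs z hz).add (hs w hw)
    by_contra hne
    have : z + w ≠ 0 := fun h => hne (zfun_add_eq_zero.1 h)
    obtain ⟨e, he⟩ := Function.ne_iff.1 this
    induction e with | _ a b
    obtain ⟨u, c, hc, -⟩ := hzw'.exists_cycle he
    have hle : fromEdgeSet {e | (z + w) e ≠ 0} ≤ T := by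
      rw [fromEdgeSet_le]
      rintro e ⟨he, -⟩
      by_contra h
      by_cases heG : e ∈ G.edgeSet
      · have heD : e ∈ D := by
          rw [hD, mem_sdiff, mem_edgeFinset, mem_edgeFinset]; exact ⟨heG, h⟩
        apply he
        have := congrFun hzw ⟨e, heD⟩
        simp only at this
        rw [Pi.add_apply, this]; exact zmod2_add_self _
      · exact he (hzw'.1 e heG)
    exact hT.isAcyclic _ (hc.mapLe hle)
  have := card_le_card_of_injOn (t := univ) _ (fun _ _ => mem_univ _) hinj
  simpa [hDc, ZMod.card] using this

/-- Two distinct nonzero elements generate the cycle space of a bicyclic graph. -/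
theorem cycleSpace_cases [DecidableEq V] {G : SimpleGraph V} (hG : Bicyclic V G)
    {x y z : Sym2 V → ZMod 2} (hx : InCycleSpace G x) (hy : InCycleSpace G y)
    (hz : InCycleSpace G z) (hx0 : x ≠ 0) (hy0 : y ≠ 0) (hxy : x ≠ y) (hz0 : z ≠ 0) :
    z = x ∨ z = y ∨ z = x + y := by
  by_contra! h
  have h0 : InCycleSpace G 0 := ⟨fun _ _ => rfl, fun v => by simp⟩
  have := card_cycleSpace hG {0, x, y, x + y, z} (by
    simp only [mem_insert, mem_singleton]
    rintro w (rfl | rfl | rfl | rfl | rfl)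
    exacts [h0, hx, hy, hx.add hy, hz])
  have h1 : x + y ≠ 0 := fun h => hxy (zfun_add_eq_zero.1 h)
  have h2 : x ≠ x + y := by simpa using hy0
  have h3 : y ≠ x + y := by simpa using hx0
  rw [card_insert_of_notMem, card_insert_of_notMem, card_insert_of_notMem, card_insert_of_notMem]
    at this
  · simp at this
  all_goals simp only [mem_insert, mem_singleton, not_or]
  · exact h.2.2.symm
  · exact ⟨h3, h.2.1.symm⟩
  · exact ⟨hxy, h2, h.1.symm⟩
  · exact ⟨hx0.symm, hy0.symm, h1.symm, hz0.symm⟩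

theorem walkVec_mem [DecidableEq V] {G : SimpleGraph V} {v : V} {c : G.Walk v v}
    (hc : c.IsCycle) : InCycleSpace G (walkVec c) := by
  obtain ⟨σ, hσ⟩ := exists_perm_of_cycle hc
  refine ⟨fun e he => ?_, fun a => ?_⟩
  · unfold walkVec
    rw [if_neg]
    exact fun h => he (c.edges_subset_edgeSet h)
  · unfold walkVec
    simp only [hσ.mem_edges]
    by_cases ha : a ∈ c.support
    · have hlong : σ (σ (σ.symm a)) ≠ σ.symm a := by
        refine long_of_card hσ.cycleOn hσ.three_le ?_
        have := hσ.cycleOn.apply_mem_iff (x := σ.symm a)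
        simpa [ha] using this
      rw [Equiv.apply_symm_apply] at hlong
      have : ∀ u, (if a ∈ c.support ∧ (u = σ a ∨ a = σ u) then (1 : ZMod 2) else 0) =
          (if u = σ a then 1 else 0) + (if u = σ.symm a then 1 else 0) := by
        intro u
        have e : a = σ u ↔ u = σ.symm a := by rw [Equiv.eq_symm_apply, eq_comm]
        simp only [ha, true_and, e]
        by_cases h1 : u = σ a
        · have : u ≠ σ.symm a := by rw [h1]; exact hlong
          rw [if_pos (Or.inl h1), if_pos h1, if_neg this, add_zero]
        · simp [h1]
      refine (sum_congr rfl fun u _ => ?_).trans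
        (b := ∑ u, ((if u = σ a then (1 : ZMod 2) else 0) + (if u = σ.symm a then 1 else 0))) ?_
      · rw [← this u]
      · rw [sum_add_distrib]; simp; decide
    · simp [ha]

end CycleSpace

/-! ### Perfect matchings and the cycle space -/

section Matchings
open Finset Equiv

variable {V : Type*} [Fintype V] [DecidableEq V]

/-- A perfect matching of `G` encoded as a permutation: `α` exchanges the two ends of every
matching edge. -/
def IsMate (G : SimpleGraph V) (α : Perm V) : Prop :=
  (∀ v, G.Adj v (α v)) ∧ ∀ v, α (α v) = v

/-- The set of edges `{v, α v}`. -/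
def mateEdges (α : Perm V) : Finset (Sym2 V) := univ.image (fun v => s(v, α v))

theorem mem_mateEdges {G : SimpleGraph V} {α : Perm V} (h : IsMate G α) {a b : V} :
    s(a, b) ∈ mateEdges α ↔ α a = b := by
  simp only [mateEdges, mem_image, mem_univ, true_and, Sym2.eq_iff]
  constructor
  · rintro ⟨u, ⟨rfl, rfl⟩ | ⟨rfl, rfl⟩⟩
    · rfl
    · exact h.2 _
  · rintro rfl; exact ⟨a, Or.inl ⟨rfl, rfl⟩⟩

theorem IsMate.isPM {G : SimpleGraph V} {α : Perm V} (h : IsMate G α) : IsPM G (mateEdges α) := by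
  refine ⟨fun e he => ?_, fun v => ?_⟩
  · induction e with | _ a b
    rw [mem_mateEdges h] at he
    rw [← he]; exact h.1 a
  · rw [card_eq_one]
    refine ⟨s(v, α v), ?_⟩
    ext e
    rw [mem_filter, mem_singleton]
    constructor
    · rintro ⟨he, hv⟩
      obtain ⟨w, rfl⟩ := Sym2.mem_iff_exists.1 hv
      rw [mem_mateEdges h] at he
      rw [he]
    · rintro rfl
      exact ⟨(mem_mateEdges h).2 rfl, Sym2.mem_mk_left _ _⟩

theorem exists_mate {G : SimpleGraph V} {M : Finset (Sym2 V)} (h : IsPM G M) :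
    ∃ α : Perm V, IsMate G α ∧ mateEdges α = M := by
  have key : ∀ v, ∃ w, s(v, w) ∈ M ∧ ∀ u, s(v, u) ∈ M → u = w := by
    intro v
    obtain ⟨e, he⟩ := card_eq_one.1 (h.2 v)
    have he' : e ∈ M.filter (fun e => v ∈ e) := by rw [he]; exact mem_singleton_self _
    rw [mem_filter] at he'
    obtain ⟨w, rfl⟩ := Sym2.mem_iff_exists.1 he'.2
    refine ⟨w, he'.1, fun u hu => ?_⟩
    have : s(v, u) ∈ M.filter (fun e => v ∈ e) :=
      mem_filter.2 ⟨hu, Sym2.mem_mk_left _ _⟩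
    rw [he, mem_singleton] at this
    exact Sym2.congr_right.1 this
  choose f hf hu using key
  have hinv : Function.Involutive f := by
    intro v
    have := hf v
    rw [Sym2.eq_swap] at this
    exact (hu _ _ this).symm
  have hm : IsMate G (hinv.toPerm f) := ⟨fun v => h.1 _ (hf v), fun v => hinv v⟩
  refine ⟨hinv.toPerm f, hm, ?_⟩
  ext e
  induction e with | _ a b
  rw [mem_mateEdges hm]
  exact ⟨fun h => by rw [← h]; exact hf a, fun h => (hu _ _ h).symm⟩

/-- The perfect matching as a vector over `𝔽₂`. -/
def mateVec (α : Perm V) : Sym2 V → ZMod 2 := fun e => if e ∈ mateEdges α then 1 else 0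

theorem mateVec_apply {G : SimpleGraph V} {α : Perm V} (h : IsMate G α) (a b : V) :
    mateVec α s(a, b) = if α a = b then 1 else 0 := by
  simp only [mateVec, mem_mateEdges h]

theorem mateVec_inj {G : SimpleGraph V} {α β : Perm V} (hα : IsMate G α) (hβ : IsMate G β)
    (h : mateVec α = mateVec β) : α = β := by
  ext v
  have := congrFun h s(v, α v)
  rw [mateVec_apply hα, mateVec_apply hβ, if_pos rfl] at this
  by_contra hne
  rw [if_neg (fun h => hne h.symm)] at this
  exact one_ne_zero this

theorem mateVec_add_mem {G : SimpleGraph V} {α β : Perm V} (hα : IsMate G α) (hβ : IsMate G β) :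
    InCycleSpace G (mateVec α + mateVec β) := by
  have h0 : ∀ {γ : Perm V}, IsMate G γ → ∀ e, e ∉ G.edgeSet → mateVec γ e = 0 := by
    intro γ hγ e he
    unfold mateVec
    rw [if_neg]
    exact fun h => he (hγ.isPM.1 e h)
  refine ⟨fun e he => ?_, fun v => ?_⟩
  · rw [Pi.add_apply, h0 hα e he, h0 hβ e he, add_zero]
  · simp only [Pi.add_apply, mateVec_apply hα, mateVec_apply hβ, sum_add_distrib]
    simp
    decide

open Classical in
/-- All perfect matchings of `G`. -/
noncomputable def mates (G : SimpleGraph V) : Finset (Perm V) := univ.filter (IsMate G)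

theorem mem_mates {G : SimpleGraph V} {α : Perm V} : α ∈ mates G ↔ IsMate G α := by
  simp [mates]

theorem mateEdges_inj {G : SimpleGraph V} {α β : Perm V} (hα : IsMate G α) (hβ : IsMate G β)
    (h : mateEdges α = mateEdges β) : α = β :=
  mateVec_inj hα hβ (by unfold mateVec; rw [h])

theorem existsUnique_iff (G : SimpleGraph V) : (∃! M, IsPM G M) ↔ (mates G).card = 1 := by
  rw [card_eq_one]
  constructor
  · rintro ⟨M, hM, hu⟩
    obtain ⟨α, hα, rfl⟩ := exists_mate hM
    refine ⟨α, ?_⟩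
    ext β
    rw [mem_mates, mem_singleton]
    constructor
    · intro hβ
      exact mateEdges_inj hβ hα (hu _ hβ.isPM)
    · rintro rfl; exact hα
  · rintro ⟨α, hα⟩
    have h : IsMate G α := by rw [← mem_mates, hα]; exact mem_singleton_self _
    refine ⟨_, h.isPM, fun M hM => ?_⟩
    obtain ⟨β, hβ, rfl⟩ := exists_mate hM
    rw [← mem_mates, hα, mem_singleton] at hβ
    rw [hβ]

theorem hasPM_iff (G : SimpleGraph V) : HasPM G ↔ 0 < (mates G).card := by
  rw [card_pos]
  constructor
  · rintro ⟨M, hM⟩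
    obtain ⟨α, hα, rfl⟩ := exists_mate hM
    exact ⟨α, mem_mates.2 hα⟩
  · rintro ⟨α, hα⟩
    exact ⟨_, (mem_mates.1 hα).isPM⟩

/-- Four perfect matchings of a bicyclic graph form a full coset of the cycle space. -/
theorem exists_full {G : SimpleGraph V} (hG : Bicyclic V G) (h4 : (mates G).card = 4)
    {α : Perm V} (hα : IsMate G α) {z : Sym2 V → ZMod 2} (hz : InCycleSpace G z) :
    ∃ β, IsMate G β ∧ mateVec β = mateVec α + z := by
  by_contra! hc
  set s := (mates G).image (fun β => mateVec α + mateVec β) with hs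
  have hsc : s.card = 4 := by
    rw [hs, card_image_of_injOn, h4]
    intro β hβ γ hγ h
    exact mateVec_inj (mem_mates.1 hβ) (mem_mates.1 hγ) (add_left_cancel h)
  have hzs : z ∉ s := by
    rw [hs, mem_image]
    rintro ⟨β, hβ, h⟩
    exact hc β (mem_mates.1 hβ) (zfun_add_eq.1 h)
  have := card_cycleSpace hG (insert z s) (by
    intro w hw
    rcases mem_insert.1 hw with rfl | hw
    · exact hz
    · rw [hs, mem_image] at hw
      obtain ⟨β, hβ, rfl⟩ := hw
      exact mateVec_add_mem hα (mem_mates.1 hβ))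
  rw [card_insert_of_notMem hzs, hsc] at this
  omega

theorem card_mates_le {G : SimpleGraph V} (hG : Bicyclic V G) : (mates G).card ≤ 4 := by
  rcases (mates G).eq_empty_or_nonempty with h | ⟨α, hα⟩
  · simp [h]
  · rw [mem_mates] at hα
    have := card_cycleSpace hG ((mates G).image (fun β => mateVec α + mateVec β)) (by
      intro w hw
      rw [mem_image] at hw
      obtain ⟨β, hβ, rfl⟩ := hw
      exact mateVec_add_mem hα (mem_mates.1 hβ))
    rwa [card_image_of_injOn] at this
    intro β hβ γ hγ h
    exact mateVec_inj (mem_mates.1 hβ) (mem_mates.1 hγ) (add_left_cancel h)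

/-- Independence of `c` in terms of an involution on the vertices off `c`. -/
theorem isIndep_iff {G : SimpleGraph V} {v : V} (c : G.Walk v v) :
    IsIndep G c ↔ ∃ β : V → V, ∀ u, u ∉ c.support →
      β u ∉ c.support ∧ G.Adj u (β u) ∧ β (β u) = u := by
  classical
  unfold IsIndep
  have : Fintype {x : V | x ∉ c.support} := Fintype.ofFinite _
  constructor
  · rintro ⟨M, hM⟩
    obtain ⟨α, hα, -⟩ := exists_mate hM
    refine ⟨fun u => if h : u ∉ c.support then (α ⟨u, h⟩).1 else u, fun u hu => ?_⟩
    have h1 : (α ⟨u, hu⟩).1 ∉ c.support := (α ⟨u, hu⟩).2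
    simp only [hu, not_false_eq_true, dite_true]
    refine ⟨h1, hα.1 ⟨u, hu⟩, ?_⟩
    rw [dif_pos h1]
    have := hα.2 ⟨u, hu⟩
    exact congrArg Subtype.val this
  · rintro ⟨β, hβ⟩
    let f : {x : V | x ∉ c.support} → {x : V | x ∉ c.support} := fun u => ⟨β u.1, (hβ u.1 u.2).1⟩
    have hf : Function.Involutive f := fun u => Subtype.ext (hβ u.1 u.2).2.2
    have hm : IsMate (G.induce {x : V | x ∉ c.support}) (hf.toPerm f) :=
      ⟨fun u => (hβ u.1 u.2).2.1, fun u => hf u⟩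
    exact ⟨_, hm.isPM⟩

theorem isIndep_of_sum {G : SimpleGraph V} {v : V} {c : G.Walk v v} (hc : c.IsCycle)
    {α β : Perm V} (hα : IsMate G α) (hβ : IsMate G β)
    (h : walkVec c = mateVec α + mateVec β) : IsIndep G c := by
  classical
  have key : ∀ a b, s(a, b) ∈ c.edges ↔ ¬ (α a = b ↔ β a = b) := by
    intro a b
    have := congrFun h s(a, b)
    rw [Pi.add_apply, mateVec_apply hα, mateVec_apply hβ] at this
    unfold walkVec at this
    by_cases h1 : s(a, b) ∈ c.edges <;> by_cases h2 : α a = b <;> by_cases h3 : β a = b <;>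
      simp [h1, h2, h3] at this ⊢
  have hsupp : ∀ a, a ∈ c.support ↔ α a ≠ β a := by
    intro a
    constructor
    · intro ha he
      obtain ⟨b, -, hb⟩ := exists_edge_ne hc ha a
      rw [key, he] at hb
      exact hb Iff.rfl
    · intro hne
      have : s(a, α a) ∈ c.edges := by
        rw [key]; simp [hne.symm]
      exact c.fst_mem_support_of_mem_edges this
  rw [isIndep_iff]
  refine ⟨α, fun u hu => ⟨?_, hα.1 u, hα.2 u⟩⟩
  rw [hsupp, not_not] at hu ⊢
  rw [hα.2, hu, hβ.2]

/-- Three perfect matchings in a graph with no fourth one meet some vertex in three different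
edges: otherwise their sum over `𝔽₂` would be a fourth perfect matching. -/
theorem exists_triple {G : SimpleGraph V} {α β γ : Perm V} (hm : mates G = {α, β, γ})
    (hab : α ≠ β) (hac : α ≠ γ) (hbc : β ≠ γ) :
    ∃ v, α v ≠ β v ∧ α v ≠ γ v ∧ β v ≠ γ v := by
  by_contra! h
  have hα : IsMate G α := by rw [← mem_mates, hm]; simp
  have hβ : IsMate G β := by rw [← mem_mates, hm]; simp
  have hγ : IsMate G γ := by rw [← mem_mates, hm]; simp
  obtain ⟨hα1, hα2⟩ := hα
  obtain ⟨hβ1, hβ2⟩ := hβ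
  obtain ⟨hγ1, hγ2⟩ := hγ
  let f : V → V := fun v => if α v = β v then γ v else if α v = γ v then β v else α v
  have hf : ∀ v, f v = if α v = β v then γ v else if α v = γ v then β v else α v := fun _ => rfl
  have hinv : Function.Involutive f := by
    intro v
    have h1 := h v
    have h2 := h (f v)
    rw [hf (f v)]
    rw [hf v] at h2 ⊢
    grind
  have hδ : IsMate G (hinv.toPerm f) := by
    refine ⟨fun v => ?_, fun v => hinv v⟩
    change G.Adj v (f v)
    rw [hf]
    split_ifs
    exacts [hγ1 v, hβ1 v, hα1 v]
  rw [← mem_mates, hm] at hδ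
  simp only [mem_insert, mem_singleton] at hδ
  rcases hδ with e | e | e
  · apply hbc
    ext v
    have h1 : f v = α v := Equiv.congr_fun e v
    rw [hf] at h1
    have := h v
    grind
  · apply hac
    ext v
    have h1 : f v = β v := Equiv.congr_fun e v
    rw [hf] at h1
    have := h v
    grind
  · apply hab
    ext v
    have h1 : f v = γ v := Equiv.congr_fun e v
    rw [hf] at h1
    have := h v
    grind

/-- The pairwise differences of three perfect matchings exhaust the nonzero elements of the cycle
space, so every cycle is the difference of two perfect matchings. -/
theorem indep_of_three {G : SimpleGraph V} (hG : Bicyclic V G) (h3 : (mates G).card = 3)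
    {v : V} {c : G.Walk v v} (hc : c.IsCycle) : IsIndep G c := by
  obtain ⟨α, β, γ, hab, hac, hbc, hm⟩ := card_eq_three.1 h3
  have hα : IsMate G α := by rw [← mem_mates, hm]; simp
  have hβ : IsMate G β := by rw [← mem_mates, hm]; simp
  have hγ : IsMate G γ := by rw [← mem_mates, hm]; simp
  have h0 : walkVec c ≠ 0 := by
    obtain ⟨b, -, hb⟩ := exists_edge_ne hc c.start_mem_support v
    exact walkVec_ne_zero hb
  have hsum : (mateVec α + mateVec β) + (mateVec α + mateVec γ) = mateVec β + mateVec γ := by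
    rw [add_add_add_comm, zfun_add_self, zero_add]
  rcases cycleSpace_cases hG (mateVec_add_mem hα hβ) (mateVec_add_mem hα hγ) (walkVec_mem hc)
    (fun h => hab (mateVec_inj hα hβ (zfun_add_eq_zero.1 h)))
    (fun h => hac (mateVec_inj hα hγ (zfun_add_eq_zero.1 h)))
    (fun h => hbc (mateVec_inj hβ hγ (add_left_cancel h))) h0 with h | h | h
  · exact isIndep_of_sum hc hα hβ h
  · exact isIndep_of_sum hc hα hγ h
  · rw [hsum] at h
    exact isIndep_of_sum hc hβ hγ h

/-- Three perfect matchings that use three different edges at a vertex give two cycles through one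
of these edges. -/
theorem theta_of_three {G : SimpleGraph V} (h3 : (mates G).card = 3) : ThetaType G := by
  obtain ⟨α, β, γ, hab, hac, hbc, hm⟩ := card_eq_three.1 h3
  have hα : IsMate G α := by rw [← mem_mates, hm]; simp
  have hβ : IsMate G β := by rw [← mem_mates, hm]; simp
  have hγ : IsMate G γ := by rw [← mem_mates, hm]; simp
  obtain ⟨v, h1, h2, h3⟩ := exists_triple hm hab hac hbc
  -- the cycles through the edge `{v, α v}` inside `α + β` and inside `α + γ` differ at `v`
  have hz := mateVec_add_mem hα hβ
  have hw := mateVec_add_mem hα hγ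
  have e1 : (mateVec α + mateVec β) s(v, α v) ≠ 0 := by
    rw [Pi.add_apply, mateVec_apply hα, mateVec_apply hβ]; simp [h1.symm]
  have e2 : (mateVec α + mateVec γ) s(v, α v) ≠ 0 := by
    rw [Pi.add_apply, mateVec_apply hα, mateVec_apply hγ]; simp [h2.symm]
  obtain ⟨u, c, hc, hcv⟩ := hz.exists_cycle e1
  obtain ⟨w, d, hd, hdv⟩ := hw.exists_cycle e2
  intro hinf
  refine hinf u w (c.mapLe (support_le hz)) (d.mapLe (support_le hw)) (hc.mapLe _) (hd.mapLe _) ?_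
    s(v, α v) (by rwa [Walk.edges_mapLe_eq_edges]) (by rwa [Walk.edges_mapLe_eq_edges])
  intro hs
  unfold SameCycle at hs
  rw [Walk.edges_mapLe_eq_edges, Walk.edges_mapLe_eq_edges] at hs
  obtain ⟨b, hb, hbc⟩ := exists_edge_ne hc (c.fst_mem_support_of_mem_edges hcv) (α v)
  have hbd : s(v, b) ∈ d.edges := by
    rw [← List.mem_toFinset, ← hs, List.mem_toFinset]; exact hbc
  have f1 := c.edges_subset_edgeSet hbc
  have f2 := d.edges_subset_edgeSet hbd
  rw [mem_edgeSet, fromEdgeSet_adj] at f1 f2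
  have f1 := f1.1
  have f2 := f2.1
  rw [Set.mem_ofPred_eq, Pi.add_apply, mateVec_apply hα, mateVec_apply hβ, if_neg hb.symm,
    zero_add] at f1
  rw [Set.mem_ofPred_eq, Pi.add_apply, mateVec_apply hα, mateVec_apply hγ, if_neg hb.symm,
    zero_add] at f2
  exact h3 ((by simpa using f1 : β v = b).trans (by simpa using f2 : γ v = b).symm)

end Matchings

/-! ### Perfect matchings from permutations -/

section Constructions
open Finset Equiv

variable {V : Type*}

/-- A finite set with a fixed-point-free involution has even cardinality. -/
theorem even_card_of_fpf {T : Finset V} (g : V → V) (h1 : ∀ v ∈ T, g v ∈ T)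
    (h2 : ∀ v ∈ T, g (g v) = v) (h3 : ∀ v ∈ T, g v ≠ v) : Even (#T) := by
  have : ((#T : ℕ) : ZMod 2) = 0 := by
    rw [Finset.cast_card]
    exact sum_involution (fun v _ => g v) (fun v _ => by decide) (fun v hv _ => h3 v hv)
      (fun v hv => h1 v hv) (fun v hv => h2 v hv)
  exact (ZMod.natCast_eq_zero_iff_even).1 this

/-- An orbit of even length can be coloured alternately. -/
theorem exists_coloring {σ : Perm V} {S : Finset V} (hS : σ.IsCycleOn (S : Set V))
    (he : Even (#S)) : ∃ f : V → Bool, ∀ v ∈ S, f (σ v) = !f v := by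
  rcases S.eq_empty_or_nonempty with rfl | ⟨a, ha⟩
  · exact ⟨fun _ => true, by simp⟩
  have key : ∀ v ∈ S, ∃ k : ℕ, (σ ^ k) a = v := fun v hv => by
    obtain ⟨n, -, h⟩ := hS.exists_pow_eq ha hv
    exact ⟨n, h⟩
  choose! k hk using key
  refine ⟨fun v => decide (Even (k v)), fun v hv => ?_⟩
  have hσv : σ v ∈ S := by simpa [hv] using hS.apply_mem_iff (x := v)
  have : (σ ^ k (σ v)) a = (σ ^ (k v + 1)) a := by
    rw [hk _ hσv, pow_succ', Perm.mul_apply, hk _ hv]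
  rw [hS.pow_apply_eq_pow_apply ha] at this
  have h2 : k (σ v) % 2 = (k v + 1) % 2 := this.of_dvd he.two_dvd
  have h3 : Even (k (σ v)) ↔ ¬ Even (k v) := by
    rw [Nat.even_iff, Nat.even_iff]; omega
  by_cases h : Even (k v) <;> simp [h3, h]

/-- A property shared by the two ends of each edge of a walk is constant along the walk. -/
theorem agree_of_edges {G : SimpleGraph V} {Q : V → Prop} {u w : V} (p : G.Walk u w)
    (h : ∀ a b, s(a, b) ∈ p.edges → (Q a ↔ Q b)) : ∀ a ∈ p.support, (Q u ↔ Q a) := by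
  induction p with
  | nil => intro a ha; simp at ha; rw [ha]
  | cons hadj p ih =>
    intro a ha
    rw [Walk.support_cons, List.mem_cons] at ha
    rcases ha with rfl | ha
    · rfl
    · rw [h _ _ (by rw [Walk.edges_cons]; exact List.mem_cons_self)]
      exact ih
        (fun a b hab => h a b (by rw [Walk.edges_cons]; exact List.mem_cons_of_mem _ hab)) a ha

theorem IsMate.even_card [Fintype V] {G : SimpleGraph V} {α : Perm V} (h : IsMate G α) :
    Even (Fintype.card V) :=
  even_card_of_fpf (T := univ) α (fun _ _ => mem_univ _) (fun v _ => h.2 v)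
    (fun v _ => (h.1 v).ne')

variable [DecidableEq V]

/-- A permutation along edges that is an involution off a two-coloured union `S` of orbits yields a
perfect matching: on `S`, pair every vertex of colour `true` with its image. -/
theorem exists_half {G : SimpleGraph V} {σ : Perm V} {S : Finset V} (h : ∀ v, G.Adj v (σ v))
    (hS : ∀ v, σ v ∈ S ↔ v ∈ S) (hoff : ∀ v, v ∉ S → σ (σ v) = v) {f : V → Bool}
    (hf : ∀ v ∈ S, f (σ v) = !f v) :
    ∃ α : Perm V, IsMate G α ∧ ∀ v, α v = if v ∈ S ∧ f v = false then σ.symm v else σ v := by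
  have hS' : ∀ v, σ.symm v ∈ S ↔ v ∈ S := fun v => by rw [← hS (σ.symm v), apply_symm_apply]
  have hf' : ∀ v ∈ S, f (σ.symm v) = !f v := fun v hv => by
    have := hf (σ.symm v) ((hS' v).2 hv)
    rw [apply_symm_apply] at this
    simp [this]
  let g : V → V := fun v => if v ∈ S ∧ f v = false then σ.symm v else σ v
  have hg : ∀ v, g v = if v ∈ S ∧ f v = false then σ.symm v else σ v := fun _ => rfl
  have hinv : Function.Involutive g := by
    intro v
    rw [hg v]
    by_cases hv : v ∈ S
    · cases hfv : f v
      · rw [if_pos ⟨hv, rfl⟩, hg, if_neg (by rw [hf' v hv, hfv]; simp), apply_symm_apply]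
      · rw [if_neg (by simp), hg, if_pos ⟨(hS v).2 hv, by rw [hf v hv, hfv]; rfl⟩,
          symm_apply_apply]
    · rw [if_neg (by simp [hv]), hg, if_neg (by simp [hS, hv]), hoff v hv]
  refine ⟨hinv.toPerm g, ⟨fun v => ?_, fun v => hinv v⟩, fun v => rfl⟩
  change G.Adj v (g v)
  rw [hg]
  split_ifs
  · have := h (σ.symm v)
    rw [apply_symm_apply] at this
    exact this.symm
  · exact h v

theorem Traces.congr {G : SimpleGraph V} {v : V} {c : G.Walk v v} {γ σ : Perm V}
    (h : Traces c γ) (he : ∀ u ∈ c.support, σ u = γ u) : Traces c σ := by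
  have he' : ∀ u ∈ c.support.toFinset, σ u = γ u := fun u hu => he u (List.mem_toFinset.1 hu)
  have hpow : ∀ (n : ℕ), ∀ u ∈ c.support.toFinset, (σ ^ n) u = (γ ^ n) u := by
    intro n
    induction n with
    | zero => intro u _; rfl
    | succ n ih =>
      intro u hu
      rw [pow_succ, pow_succ, Perm.mul_apply, Perm.mul_apply, he' u hu,
        ih _ (by simpa [List.mem_toFinset.1 hu] using h.cycleOn.apply_mem_iff (x := u))]
  refine ⟨⟨?_, ?_⟩, h.three_le, h.card_eq, ?_, ?_⟩
  · exact h.cycleOn.1.congr fun u hu => (he' u (mem_coe.1 hu)).symm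
  · intro x hx y hy
    obtain ⟨n, -, hn⟩ := h.cycleOn.exists_pow_eq (mem_coe.1 hx) (mem_coe.1 hy)
    exact ⟨n, by rw [zpow_natCast, hpow n x (mem_coe.1 hx), hn]⟩
  · rw [h.edges_eq]
    exact image_congr fun u hu => by simp only [he' u (mem_coe.1 hu)]
  · intro A
    rw [h.weight_eq]
    exact prod_congr rfl fun u hu => by rw [he' u hu]

variable [Fintype V]

/-- An independent cycle together with a perfect matching of its complement is a permutation
along edges. -/
theorem exists_indep_perm {G : SimpleGraph V} {v : V} {c : G.Walk v v} (hc : c.IsCycle)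
    (hi : IsIndep G c) : ∃ σ : Perm V, (∀ u, G.Adj u (σ u)) ∧ Traces c σ ∧
      ∀ u, u ∉ c.support → σ (σ u) = u := by
  obtain ⟨γ, hγ⟩ := exists_perm_of_cycle hc
  obtain ⟨β, hβ⟩ := (isIndep_iff c).1 hi
  have hm : ∀ u, γ u ∈ c.support ↔ u ∈ c.support := fun u => by
    simpa using hγ.cycleOn.apply_mem_iff (x := u)
  have hm' : ∀ u, γ.symm u ∈ c.support ↔ u ∈ c.support := fun u => by
    rw [← hm (γ.symm u), apply_symm_apply]
  let σ : Perm V :=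
    { toFun := fun u => if u ∈ c.support then γ u else β u
      invFun := fun u => if u ∈ c.support then γ.symm u else β u
      left_inv := fun u => by
        by_cases hu : u ∈ c.support
        · simp [hu, hm]
        · simp [hu, hβ u hu]
      right_inv := fun u => by
        by_cases hu : u ∈ c.support
        · simp [hu, hm']
        · simp [hu, hβ u hu] }
  have h1 : ∀ u, u ∈ c.support → σ u = γ u := fun u hu => if_pos hu
  have h2 : ∀ u, u ∉ c.support → σ u = β u := fun u hu => if_neg hu
  refine ⟨σ, fun u => ?_, hγ.congr h1, fun u hu => ?_⟩
  · by_cases hu : u ∈ c.support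
    · rw [h1 u hu]
      exact c.adj_of_mem_edges (hγ.mem_edges.2 ⟨hu, Or.inl rfl⟩)
    · rw [h2 u hu]; exact (hβ u hu).2.1
  · rw [h2 u hu, h2 _ (hβ u hu).1]; exact (hβ u hu).2.2

theorem even_card_of_off {G : SimpleGraph V} {σ : Perm V} {S : Finset V}
    (h : ∀ v, G.Adj v (σ v)) (hS : ∀ v, σ v ∈ S ↔ v ∈ S) (hoff : ∀ v, v ∉ S → σ (σ v) = v) :
    Even (#(Sᶜ)) :=
  even_card_of_fpf σ (fun v hv => by simpa [hS] using hv) (fun v hv => hoff v (mem_compl.1 hv))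
    (fun v _ => (h v).ne')

theorem even_card_on {G : SimpleGraph V} {σ : Perm V} {S : Finset V}
    (h : ∀ v, G.Adj v (σ v)) (hS : ∀ v, σ v ∈ S ↔ v ∈ S) (hoff : ∀ v, v ∉ S → σ (σ v) = v)
    (hn : Even (Fintype.card V)) : Even (#S) := by
  have h1 := even_card_of_off h hS hoff
  have h2 := card_add_card_compl S
  rw [← h2, Nat.even_add] at hn
  exact hn.2 h1

/-- In a graph with evenly many vertices, an independent cycle is the symmetric difference of two
perfect matchings, which use the even and the odd edges of the cycle. -/
theorem exists_mates_add {G : SimpleGraph V} (hn : Even (Fintype.card V)) {v : V} {c : G.Walk v v}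
    (hc : c.IsCycle) (hi : IsIndep G c) : ∃ α β : Perm V, IsMate G α ∧ IsMate G β ∧
      mateVec α + mateVec β = walkVec c := by
  classical
  obtain ⟨σ, hadj, htr, hoff⟩ := exists_indep_perm hc hi
  have hS : ∀ u, σ u ∈ c.support.toFinset ↔ u ∈ c.support.toFinset := fun u => by
    simpa using htr.cycleOn.apply_mem_iff (x := u)
  have hoff' : ∀ u, u ∉ c.support.toFinset → σ (σ u) = u := fun u hu =>
    hoff u (by simpa using hu)
  obtain ⟨f, hf⟩ := exists_coloring htr.cycleOn (even_card_on hadj hS hoff' hn)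
  obtain ⟨α, hα, hα'⟩ := exists_half hadj hS hoff' hf
  obtain ⟨β, hβ, hβ'⟩ := exists_half hadj hS hoff' (f := fun u => !f u) (by simpa using hf)
  refine ⟨α, β, hα, hβ, ?_⟩
  ext e
  induction e with | _ a b
  rw [Pi.add_apply, mateVec_apply hα, mateVec_apply hβ, hα', hβ']
  unfold walkVec
  simp only [htr.mem_edges, List.mem_toFinset]
  have hab : a = σ b ↔ σ.symm a = b := by rw [symm_apply_eq]
  by_cases ha : a ∈ c.support
  · have hl := long_of_card (v := σ.symm a) htr.cycleOn htr.three_le (by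
      rw [← hS, apply_symm_apply]; simpa using ha)
    rw [apply_symm_apply] at hl
    cases f a <;> simp only [ha, hab, eq_comm (a := b), true_and, Bool.not_true, Bool.not_false,
      if_true, if_false, reduceCtorEq] <;>
      by_cases e1 : σ a = b <;> by_cases e2 : σ.symm a = b <;> simp [e1, e2] <;>
      exact hl (e1.trans e2.symm)
  · simp only [ha, false_and, if_false]
    exact zmod2_add_self _

/-- With four perfect matchings, `α`, `α + c`, `α + d` and `α + c + d` are all perfect matchings for
any two cycles `c ≠ d`; hence `c` and `d` use the same edges at a common vertex, and sharing an edge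
would make them equal. -/
theorem infinity_of_four {G : SimpleGraph V} (hG : Bicyclic V G) (h4 : #(mates G) = 4) :
    InfinityType G := by
  classical
  intro u v c d hc hd hne e hec hed
  obtain ⟨α, hα⟩ : (mates G).Nonempty := by rw [← card_pos]; omega
  rw [mem_mates] at hα
  obtain ⟨β, hβ, hβ'⟩ := exists_full hG h4 hα (walkVec_mem hc)
  obtain ⟨γ, hγ, hγ'⟩ := exists_full hG h4 hα (walkVec_mem hd)
  obtain ⟨δ, hδ, hδ'⟩ := exists_full hG h4 hα ((walkVec_mem hc).add (walkVec_mem hd))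
  have eqs : ∀ a b, ((s(a, b) ∈ c.edges ↔ ¬ (α a = b ↔ β a = b)) ∧
      (s(a, b) ∈ d.edges ↔ ¬ (α a = b ↔ γ a = b))) ∧
      ((s(a, b) ∈ c.edges ↔ s(a, b) ∈ d.edges) ↔ (α a = b ↔ δ a = b)) := by
    intro a b
    have h1 := congrFun hβ' s(a, b)
    have h2 := congrFun hγ' s(a, b)
    have h3 := congrFun hδ' s(a, b)
    rw [Pi.add_apply, mateVec_apply hα] at h1 h2 h3
    rw [mateVec_apply hβ] at h1
    rw [mateVec_apply hγ] at h2
    rw [mateVec_apply hδ, Pi.add_apply] at h3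
    unfold walkVec at h1 h2 h3
    by_cases x1 : s(a, b) ∈ c.edges <;> by_cases x2 : s(a, b) ∈ d.edges <;>
      by_cases x3 : α a = b <;> simp only [x1, x2, x3, if_true, if_false] at h1 h2 h3 ⊢ <;>
      by_cases x4 : β a = b <;> by_cases x5 : γ a = b <;> by_cases x6 : δ a = b <;>
      simp only [x4, x5, x6, if_true, if_false] at h1 h2 h3 ⊢ <;> revert h1 h2 h3 <;> decide
  have local_agree : ∀ a, a ∈ c.support → a ∈ d.support → ∀ b,
      (s(a, b) ∈ c.edges ↔ s(a, b) ∈ d.edges) := by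
    intro a hac had
    obtain ⟨b1, -, hb1⟩ := exists_edge_ne hc hac a
    obtain ⟨b2, -, hb2⟩ := exists_edge_ne hd had a
    have k1 : α a ≠ β a := fun h => by
      have := (eqs a b1).1.1.1 hb1; rw [h] at this; exact this Iff.rfl
    have k2 : α a ≠ γ a := fun h => by
      have := (eqs a b2).1.2.1 hb2; rw [h] at this; exact this Iff.rfl
    have hβγ : β a = γ a := by
      by_contra hne
      have p1 := eqs a (β a)
      have p2 := eqs a (γ a)
      grind
    intro b
    rw [(eqs a b).1.1, (eqs a b).1.2, hβγ]
  have allc : ∀ {x y : V} {p : G.Walk x x} {q : G.Walk y y}, e ∈ p.edges → e ∈ q.edges →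
      (∀ a, a ∈ p.support → a ∈ q.support → ∀ b, (s(a, b) ∈ p.edges ↔ s(a, b) ∈ q.edges)) →
      ∀ a ∈ p.support, a ∈ q.support := by
    intro x y p q hep heq hag
    have := agree_of_edges (Q := fun a => a ∈ q.support) p (fun a b hab => by
      have ha := p.fst_mem_support_of_mem_edges hab
      have hb := p.snd_mem_support_of_mem_edges hab
      constructor
      · intro h; exact q.snd_mem_support_of_mem_edges ((hag a ha h b).1 hab)
      · intro h
        rw [Sym2.eq_swap] at hab
        exact q.snd_mem_support_of_mem_edges ((hag b hb h a).1 hab))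
    induction e with | _ r s
    have h1 := this r (p.fst_mem_support_of_mem_edges hep)
    have h2 := h1.2 (q.fst_mem_support_of_mem_edges heq)
    intro a ha
    exact (this a ha).1 h2
  have hcd := allc hec hed local_agree
  have hdc := allc hed hec (fun a h1 h2 b => (local_agree a h2 h1 b).symm)
  apply hne
  unfold SameCycle
  ext e'
  induction e' with | _ r s
  rw [List.mem_toFinset, List.mem_toFinset]
  constructor
  · intro h
    have := c.fst_mem_support_of_mem_edges h
    exact (local_agree r this (hcd r this) s).1 h
  · intro h
    have := d.fst_mem_support_of_mem_edges h
    exact (local_agree r (hdc r this) this s).2 h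

theorem three_of_theta {G : SimpleGraph V} (hG : Bicyclic V G) (ht : ThetaType G) (hp : HasPM G)
    (hi : ∀ (u : V) (c : G.Walk u u), c.IsCycle → IsIndep G c) : #(mates G) = 3 := by
  have hle := card_mates_le hG
  have h4 : #(mates G) ≠ 4 := fun h => ht (infinity_of_four hG h)
  have hpos := (hasPM_iff G).1 hp
  have hn : Even (Fintype.card V) := by
    obtain ⟨α, hα⟩ := card_pos.1 hpos
    exact (mem_mates.1 hα).even_card
  unfold ThetaType InfinityType at ht
  push Not at ht
  obtain ⟨u, v, c, d, hc, hd, hne, -⟩ := ht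
  -- with at most two perfect matchings only one cycle could be a symmetric difference of two
  have h3 : 3 ≤ #(mates G) := by
    by_contra hlt
    have huniq : ∀ {w : V} {p : G.Walk w w}, p.IsCycle →
        ∑ α ∈ mates G, mateVec α = walkVec p := by
      intro w p hp
      obtain ⟨α, β, hα, hβ, hab⟩ := exists_mates_add hn hp (hi w p hp)
      have hne : α ≠ β := by
        rintro rfl
        obtain ⟨b, -, hb⟩ := exists_edge_ne hp p.start_mem_support w
        rw [zfun_add_self] at hab
        exact walkVec_ne_zero hb hab.symm
      have hsub : ({α, β} : Finset (Perm V)) ⊆ mates G := by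
        intro x hx
        simp only [mem_insert, mem_singleton] at hx
        rcases hx with rfl | rfl
        exacts [mem_mates.2 hα, mem_mates.2 hβ]
      have heq := eq_of_subset_of_card_le hsub (by rw [card_pair hne]; omega)
      rw [← heq, sum_pair hne, hab]
    exact hne (walkVec_eq_iff.1 ((huniq hc).symm.trans (huniq hd)))
  omega

end Constructions

/-! ### The determinant expansion and its cancellations -/

section Expansion
open Finset Equiv

variable {V : Type*}

theorem prod_symm {σ : Perm V} {S : Finset V} (hS : ∀ v, σ v ∈ S ↔ v ∈ S) (A : Matrix V V ℂ) :
    ∏ u ∈ S, A u (σ.symm u) = ∏ u ∈ S, A (σ u) u := by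
  symm
  refine prod_bij (fun u _ => σ u) (fun u hu => (hS u).2 hu) (fun a _ b _ h => σ.injective h)
    (fun b hb => ⟨σ.symm b, by rwa [← hS, apply_symm_apply], by simp⟩) (fun u _ => by simp)

theorem ThreeColored.conj {B : SimpleGraph V} {A : Matrix V V ℂ} (hA : ThreeColored B A) (u v : V) :
    A v u = star (A u v) := (hA.1.apply v u).symm

theorem ThreeColored.mul_swap {B : SimpleGraph V} {A : Matrix V V ℂ} (hA : ThreeColored B A)
    {u v : V} (h : B.Adj u v) : A u v * A v u = 1 := by
  rw [hA.conj u v]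
  have := hA.2.2.1 u v h
  simp only [Set.mem_insert_iff, Set.mem_singleton_iff] at this
  rcases this with h | h | h | h <;> rw [h] <;> simp

theorem ThreeColored.pow_four {B : SimpleGraph V} {A : Matrix V V ℂ} (hA : ThreeColored B A)
    {u v : V} (h : B.Adj u v) : A u v ^ 4 = 1 := by
  have := hA.2.2.1 u v h
  simp only [Set.mem_insert_iff, Set.mem_singleton_iff] at this
  rcases this with h | h | h | h <;> rw [h] <;> norm_num [Even.neg_pow, show Even 4 by decide]

theorem sameCycle_symm_apply (σ : Perm V) (u : V) : σ.SameCycle u (σ.symm u) :=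
  ⟨-1, by simp⟩

theorem star_sq_eq {z : ℂ} : star z ^ 2 = -1 ↔ z ^ 2 = -1 := by
  rw [← star_pow]
  constructor
  · intro h
    have := congrArg star h
    simpa using this
  · intro h; rw [h]; simp

theorem sameCycle_of_local [Fintype V] {σ τ : Perm V} (h : ∀ u, τ u = σ u ∨ τ u = σ.symm u) {x y : V}
    (hxy : τ.SameCycle x y) : σ.SameCycle x y := by
  obtain ⟨n, -, hn⟩ := hxy.exists_pow_eq'
  rw [← hn]
  clear hn
  induction n with
  | zero => exact Perm.SameCycle.refl _ _
  | succ n ih =>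
    rw [pow_succ', Perm.mul_apply]
    refine ih.trans ?_
    rcases h ((τ ^ n) x) with h | h <;> rw [h]
    · exact Perm.sameCycle_apply_right.2 (Perm.SameCycle.refl _ _)
    · exact sameCycle_symm_apply _ _

variable [Fintype V] [DecidableEq V]

/-- The vertices of the orbit of `v` under `σ`. -/
def orb (σ : Perm V) (v : V) : Finset V := univ.filter (σ.SameCycle v)

theorem mem_orb {σ : Perm V} {v u : V} : u ∈ orb σ v ↔ σ.SameCycle v u := by simp [orb]

theorem apply_mem_orb {σ : Perm V} {v u : V} : σ u ∈ orb σ v ↔ u ∈ orb σ v := by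
  rw [mem_orb, mem_orb, Perm.sameCycle_apply_right]

theorem self_mem_orb (σ : Perm V) (v : V) : v ∈ orb σ v := mem_orb.2 (Perm.SameCycle.refl _ _)

theorem orb_isCycleOn (σ : Perm V) (v : V) : σ.IsCycleOn (orb σ v : Set V) := by
  refine ⟨⟨fun u hu => mem_coe.2 (apply_mem_orb.2 (mem_coe.1 hu)), σ.injective.injOn, fun u hu => ?_⟩,
    fun x hx y hy => (mem_orb.1 (mem_coe.1 hx)).symm.trans (mem_orb.1 (mem_coe.1 hy))⟩
  refine ⟨σ.symm u, ?_, by simp⟩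
  rw [mem_coe, ← apply_mem_orb, apply_symm_apply]
  exact hu

/-- The contribution of a permutation to the determinant. -/
def detTerm (A : Matrix V V ℂ) (σ : Perm V) : ℂ := ((Perm.sign σ : ℤ) : ℂ) * ∏ v, A v (σ v)

/-- The permutations that move every vertex along an edge. -/
noncomputable def edgePerms (B : SimpleGraph V) : Finset (Perm V) :=
  open Classical in univ.filter (fun σ => ∀ v, B.Adj v (σ v))

theorem mem_edgePerms {B : SimpleGraph V} {σ : Perm V} :
    σ ∈ edgePerms B ↔ ∀ v, B.Adj v (σ v) := by simp [edgePerms]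

theorem det_eq_sum_s17 {B : SimpleGraph V} {A : Matrix V V ℂ} (hA : ThreeColored B A) :
    A.det = ∑ σ ∈ edgePerms B, detTerm A σ := by
  rw [← Matrix.det_transpose, Matrix.det_apply']
  symm
  refine sum_subset (subset_univ _) fun σ _ hσ => ?_
  rw [mem_edgePerms] at hσ
  push Not at hσ
  obtain ⟨v, hv⟩ := hσ
  have h0 : A v (σ v) = 0 := by
    by_cases h : v = σ v
    · rw [← h]; exact hA.2.1 v
    · exact hA.2.2.2 _ _ h hv
  rw [detTerm, prod_eq_zero (mem_univ v) h0, mul_zero]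

/-- The weight of the orbit of `v` under `σ`. -/
def orbWeight (A : Matrix V V ℂ) (σ : Perm V) (v : V) : ℂ := ∏ u ∈ orb σ v, A u (σ u)

/-- The vertices whose orbit under `σ` has weight `±i`. -/
noncomputable def imagVerts (A : Matrix V V ℂ) (σ : Perm V) : Finset V :=
  univ.filter (fun v => orbWeight A σ v ^ 2 = -1)

theorem mem_imagVerts {A : Matrix V V ℂ} {σ : Perm V} {v : V} :
    v ∈ imagVerts A σ ↔ orbWeight A σ v ^ 2 = -1 := by simp [imagVerts]

theorem orbWeight_pow {B : SimpleGraph V} {A : Matrix V V ℂ} (hA : ThreeColored B A)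
    {σ : Perm V} (hσ : ∀ v, B.Adj v (σ v)) (v : V) : orbWeight A σ v ^ 4 = 1 := by
  rw [orbWeight, ← prod_pow]
  exact prod_eq_one fun u _ => hA.pow_four (hσ u)

theorem orbWeight_mul_star {B : SimpleGraph V} {A : Matrix V V ℂ} (hA : ThreeColored B A)
    {σ : Perm V} (hσ : ∀ v, B.Adj v (σ v)) (v : V) :
    orbWeight A σ v * star (orbWeight A σ v) = 1 := by
  rw [orbWeight, star_prod, ← prod_mul_distrib]
  exact prod_eq_one fun u _ => by rw [← hA.conj]; exact hA.mul_swap (hσ u)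

theorem prod_orb_symm {B : SimpleGraph V} {A : Matrix V V ℂ} (hA : ThreeColored B A)
    (σ : Perm V) (v : V) : ∏ u ∈ orb σ v, A u (σ.symm u) = star (orbWeight A σ v) := by
  rw [prod_symm (fun u => apply_mem_orb), orbWeight, star_prod]
  exact prod_congr rfl fun u _ => hA.conj _ _

/-- Reverse the orbit of `v`, keeping all other orbits. -/
def flipOrb (σ : Perm V) (v : V) : Perm V := σ * σ⁻¹.cycleOf v * σ⁻¹.cycleOf v

theorem flipOrb_apply (σ : Perm V) (v u : V) :
    flipOrb σ v u = if σ.SameCycle v u then σ.symm u else σ u := by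
  have hc : ∀ w, σ⁻¹.cycleOf v w = if σ.SameCycle v w then σ.symm w else w := fun w => by
    rw [Perm.cycleOf_apply]
    simp only [Perm.sameCycle_inv]
    rfl
  unfold flipOrb
  rw [Perm.mul_apply, Perm.mul_apply, hc u]
  split_ifs with h
  · rw [hc, if_pos (h.trans (sameCycle_symm_apply σ u)), apply_symm_apply]
  · rw [hc, if_neg h]

theorem sign_flipOrb (σ : Perm V) (v : V) : Perm.sign (flipOrb σ v) = Perm.sign σ := by
  unfold flipOrb
  rw [Perm.sign_mul, Perm.sign_mul, mul_assoc, Int.units_mul_self, mul_one]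

theorem flipOrb_flipOrb_apply (σ : Perm V) (v u : V) :
    σ u = if σ.SameCycle v u then (flipOrb σ v).symm u else flipOrb σ v u := by
  split_ifs with h
  · rw [eq_comm, symm_apply_eq, flipOrb_apply, if_pos (Perm.sameCycle_apply_right.2 h),
      symm_apply_apply]
  · rw [flipOrb_apply, if_neg h]

theorem sameCycle_flipOrb (σ : Perm V) (v : V) {x y : V} :
    (flipOrb σ v).SameCycle x y ↔ σ.SameCycle x y := by
  constructor
  · apply sameCycle_of_local
    intro u
    rw [flipOrb_apply]
    split_ifs <;> simp
  · apply sameCycle_of_local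
    intro u
    rw [flipOrb_flipOrb_apply σ v u]
    split_ifs <;> simp

theorem flipOrb_flipOrb (σ : Perm V) (v : V) : flipOrb (flipOrb σ v) v = σ := by
  ext u
  rw [flipOrb_apply, flipOrb_flipOrb_apply σ v u]
  simp only [sameCycle_flipOrb]

theorem orb_flipOrb (σ : Perm V) (v x : V) : orb (flipOrb σ v) x = orb σ x := by
  ext u; rw [mem_orb, mem_orb, sameCycle_flipOrb]

theorem orbWeight_flipOrb {B : SimpleGraph V} {A : Matrix V V ℂ} (hA : ThreeColored B A)
    (σ : Perm V) (v x : V) : orbWeight A (flipOrb σ v) x = orbWeight A σ x ∨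
      orbWeight A (flipOrb σ v) x = star (orbWeight A σ x) := by
  by_cases h : σ.SameCycle v x
  · right
    rw [← prod_orb_symm hA, orbWeight, orb_flipOrb]
    refine prod_congr rfl fun u hu => ?_
    rw [flipOrb_apply, if_pos (h.trans (mem_orb.1 hu))]
  · left
    rw [orbWeight, orb_flipOrb]
    refine prod_congr rfl fun u hu => ?_
    rw [flipOrb_apply, if_neg fun h' => h (h'.trans (mem_orb.1 hu).symm)]

theorem imagVerts_flipOrb {B : SimpleGraph V} {A : Matrix V V ℂ} (hA : ThreeColored B A)
    (σ : Perm V) (v : V) : imagVerts A (flipOrb σ v) = imagVerts A σ := by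
  ext x
  rw [mem_imagVerts, mem_imagVerts]
  rcases orbWeight_flipOrb hA σ v x with h | h <;> rw [h]
  exact star_sq_eq

theorem detTerm_flipOrb {B : SimpleGraph V} {A : Matrix V V ℂ} (hA : ThreeColored B A)
    {σ : Perm V} (hσ : ∀ u, B.Adj u (σ u)) {v : V} (hv : v ∈ imagVerts A σ) :
    detTerm A (flipOrb σ v) = - detTerm A σ := by
  rw [mem_imagVerts] at hv
  have hstar : star (orbWeight A σ v) = - orbWeight A σ v := by
    have h1 := orbWeight_mul_star hA hσ v
    have h0 : orbWeight A σ v ≠ 0 := left_ne_zero_of_mul_eq_one h1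
    apply mul_left_cancel₀ h0
    rw [h1]
    linear_combination hv
  rw [detTerm, detTerm, sign_flipOrb, ← prod_mul_prod_compl (orb σ v) (fun u => A u (σ u)),
    ← prod_mul_prod_compl (orb σ v) (fun u => A u (flipOrb σ v u))]
  have h1 : ∏ u ∈ orb σ v, A u (flipOrb σ v u) = - ∏ u ∈ orb σ v, A u (σ u) := by
    rw [← orbWeight, ← hstar, ← prod_orb_symm hA]
    refine prod_congr rfl fun u hu => ?_
    rw [flipOrb_apply, if_pos (mem_orb.1 hu)]
  have h2 : ∏ u ∈ (orb σ v)ᶜ, A u (flipOrb σ v u) = ∏ u ∈ (orb σ v)ᶜ, A u (σ u) := by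
    refine prod_congr rfl fun u hu => ?_
    rw [mem_compl, mem_orb] at hu
    rw [flipOrb_apply, if_neg hu]
  rw [h1, h2]
  ring

theorem flipOrb_adj {B : SimpleGraph V} {σ : Perm V} (hσ : ∀ u, B.Adj u (σ u)) (v u : V) :
    B.Adj u (flipOrb σ v u) := by
  rw [flipOrb_apply]
  split_ifs
  · have := hσ (σ.symm u)
    rw [apply_symm_apply] at this
    exact this.symm
  · exact hσ u

/-- Permutations with an orbit of weight `±i` cancel in pairs: reversing such an orbit negates the
contribution to the determinant. -/
theorem sum_imag {B : SimpleGraph V} {A : Matrix V V ℂ} (hA : ThreeColored B A) :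
    ∑ σ ∈ (edgePerms B).filter (fun σ => (imagVerts A σ).Nonempty), detTerm A σ = 0 := by
  classical
  -- the orbit to reverse depends only on `imagVerts A σ`, which the reversal preserves
  have hch : ∀ {T T' : Finset V} (_ : T = T') (h : T.Nonempty) (h' : T'.Nonempty),
      h.choose = h'.choose := by
    rintro _ _ rfl _ _; rfl
  refine sum_involution (fun σ hσ => flipOrb σ (mem_filter.1 hσ).2.choose) ?_ ?_ ?_ ?_
  · intro σ hσ
    rw [detTerm_flipOrb hA (mem_edgePerms.1 (mem_filter.1 hσ).1) (mem_filter.1 hσ).2.choose_spec,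
      add_neg_cancel]
  · intro σ hσ h0 he
    have := detTerm_flipOrb hA (mem_edgePerms.1 (mem_filter.1 hσ).1)
      (mem_filter.1 hσ).2.choose_spec
    rw [he] at this
    exact h0 (self_eq_neg.1 this)
  · intro σ hσ
    rw [mem_filter, mem_edgePerms, imagVerts_flipOrb hA]
    exact ⟨fun u => flipOrb_adj (mem_edgePerms.1 (mem_filter.1 hσ).1) _ u, (mem_filter.1 hσ).2⟩
  · intro σ hσ
    rw [hch (imagVerts_flipOrb hA σ _) _ (mem_filter.1 hσ).2, flipOrb_flipOrb]

end Expansion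

/-! ### The surviving permutations -/

section Terms
open Finset Equiv

variable {V : Type*}

/-- Orbits of size two have weight `1`. -/
theorem prod_pairs {B : SimpleGraph V} {A : Matrix V V ℂ} (hA : ThreeColored B A) {σ : Perm V}
    (hσ : ∀ v, B.Adj v (σ v)) {S : Finset V} (hS : ∀ v, v ∈ S → σ v ∈ S)
    (h2 : ∀ v, v ∈ S → σ (σ v) = v) : ∏ v ∈ S, A v (σ v) = 1 := by
  refine prod_involution (fun v _ => σ v) (fun v hv => ?_) (fun v hv _ => (hσ v).ne')
    (fun v hv => hS v hv) (fun v hv => h2 v hv)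
  rw [h2 v hv]
  exact hA.mul_swap (hσ v)

variable [Fintype V] [DecidableEq V]

theorem sign_of_sq {ρ : Perm V} (h : ∀ v, ρ (ρ v) = v) :
    Perm.sign ρ = (-1) ^ (#ρ.support / 2) := by
  have h2 : ρ ^ 2 = 1 := by
    ext v; rw [pow_two, Perm.mul_apply, h]; rfl
  have h3 := Perm.cycleType_of_pow_prime_eq_one h2
  have h4 := ρ.sum_cycleType
  rw [Perm.sign_of_cycleType, h4]
  rw [h3, Multiset.sum_replicate, smul_eq_mul] at h4
  rw [← h4, Nat.mul_div_cancel _ two_pos, pow_add, pow_mul']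
  simp

theorem sign_mate {G : SimpleGraph V} {α : Perm V} (h : IsMate G α) :
    Perm.sign α = (-1) ^ (Fintype.card V / 2) := by
  rw [sign_of_sq h.2]
  congr 2
  rw [← card_univ]
  congr 1
  ext v
  simp [(h.1 v).ne']

/-- The sign of a permutation made of one long orbit and transpositions. -/
theorem sign_long {G : SimpleGraph V} {σ : Perm V} (h : ∀ v, G.Adj v (σ v)) {a : V}
    (hoff : ∀ v, v ∉ orb σ a → σ (σ v) = v) :
    Perm.sign σ = - (-1) ^ #(orb σ a) * (-1) ^ (#(orb σ a)ᶜ / 2) := by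
  set κ := σ.cycleOf a with hκ
  have hκa : ∀ u, κ u = if σ.SameCycle a u then σ u else u := fun u => Perm.cycleOf_apply _ _ _
  have hκc : κ.IsCycle := Perm.isCycle_cycleOf σ (h a).ne'
  have hsupp : κ.support = orb σ a := by
    ext u
    rw [Perm.mem_support, mem_orb, hκa]
    split_ifs with hu
    · simp [hu, (h u).ne']
    · simp [hu]
  set ρ := κ⁻¹ * σ with hρ
  have hρa : ∀ u, ρ u = if u ∈ orb σ a then u else σ u := by
    intro u
    rw [hρ, Perm.mul_apply, Perm.inv_eq_iff_eq]
    split_ifs with hu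
    · rw [hκa, if_pos (mem_orb.1 hu)]
    · rw [hκa, if_neg]
      rw [← mem_orb, apply_mem_orb]; exact hu
  have hρs : ρ.support = (orb σ a)ᶜ := by
    ext u
    rw [Perm.mem_support, mem_compl, hρa]
    split_ifs with hu
    · simp [hu]
    · simp [hu, (h u).ne']
  have hρ2 : ∀ u, ρ (ρ u) = u := by
    intro u
    by_cases hu : u ∈ orb σ a
    · rw [hρa u, if_pos hu, hρa u, if_pos hu]
    · rw [hρa u, if_neg hu, hρa, if_neg (by rwa [apply_mem_orb]), hoff u hu]
  have hσ : σ = κ * ρ := by rw [hρ, mul_inv_cancel_left]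
  conv_lhs => rw [hσ]
  rw [Perm.sign_mul, hκc.sign, hsupp, sign_of_sq hρ2, hρs]

theorem detTerm_mate {B : SimpleGraph V} {A : Matrix V V ℂ} (hA : ThreeColored B A) {α : Perm V}
    (h : IsMate B α) : detTerm A α = (-1) ^ (Fintype.card V / 2) := by
  rw [detTerm, sign_mate h, prod_pairs hA h.1 (fun _ _ => mem_univ _) (fun v _ => h.2 v)]
  simp

theorem imagVerts_mate {B : SimpleGraph V} {A : Matrix V V ℂ} (hA : ThreeColored B A) {α : Perm V}
    (h : IsMate B α) : imagVerts A α = ∅ := by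
  rw [eq_empty_iff_forall_notMem]
  intro v hv
  rw [mem_imagVerts, orbWeight, prod_pairs hA h.1 (fun _ => apply_mem_orb.2) (fun v _ => h.2 v)]
    at hv
  norm_num at hv

/-- The permutations along edges that have no orbit of weight `±i` and are not perfect matchings:
these are what remains of the determinant besides the perfect matchings. -/
noncomputable def realPerms (B : SimpleGraph V) (A : Matrix V V ℂ) : Finset (Perm V) :=
  (edgePerms B).filter (fun σ => imagVerts A σ = ∅ ∧ ∃ v, σ (σ v) ≠ v)

theorem mem_realPerms {B : SimpleGraph V} {A : Matrix V V ℂ} {σ : Perm V} :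
    σ ∈ realPerms B A ↔ (∀ v, B.Adj v (σ v)) ∧ imagVerts A σ = ∅ ∧ ∃ v, σ (σ v) ≠ v := by
  rw [realPerms, mem_filter, mem_edgePerms]

theorem det_eq_mates_add {B : SimpleGraph V} {A : Matrix V V ℂ} (hA : ThreeColored B A) :
    A.det = (-1) ^ (Fintype.card V / 2) * #(mates B) + ∑ σ ∈ realPerms B A, detTerm A σ := by
  classical
  have h1 : ∑ σ ∈ mates B, detTerm A σ = (-1) ^ (Fintype.card V / 2) * #(mates B) := by
    rw [sum_congr rfl (fun σ hσ => detTerm_mate hA (mem_mates.1 hσ)), sum_const, nsmul_eq_mul,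
      mul_comm]
  have hd : Disjoint (mates B) (realPerms B A) := by
    rw [Finset.disjoint_left]
    intro σ h1 h2
    obtain ⟨v, hv⟩ := (mem_realPerms.1 h2).2.2
    exact hv ((mem_mates.1 h1).2 v)
  rw [det_eq_sum_s17 hA, ← sum_filter_add_sum_filter_not _ (fun σ => (imagVerts A σ).Nonempty),
    sum_imag hA, zero_add, ← h1, ← sum_union hd]
  refine sum_congr ?_ fun _ _ => rfl
  ext σ
  rw [mem_filter, mem_edgePerms, mem_union, mem_mates, mem_realPerms, not_nonempty_iff_eq_empty]
  constructor
  · rintro ⟨h, h0⟩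
    by_cases hv : ∃ v, σ (σ v) ≠ v
    · exact Or.inr ⟨h, h0, hv⟩
    · push Not at hv
      exact Or.inl ⟨h, hv⟩
  · rintro (h | h)
    · exact ⟨h.1, imagVerts_mate hA h⟩
    · exact ⟨h.1, h.2.1⟩

theorem orbWeight_sq {B : SimpleGraph V} {A : Matrix V V ℂ} (hA : ThreeColored B A)
    {σ : Perm V} (hσ : σ ∈ realPerms B A) (v : V) : orbWeight A σ v ^ 2 = 1 := by
  rw [mem_realPerms] at hσ
  have h1 := orbWeight_pow hA hσ.1 v
  have h2 : ¬ orbWeight A σ v ^ 2 = -1 := by rw [← mem_imagVerts, hσ.2.1]; simp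
  have : (orbWeight A σ v ^ 2 - 1) * (orbWeight A σ v ^ 2 + 1) = 0 := by linear_combination h1
  rcases mul_eq_zero.1 this with h | h
  · exact sub_eq_zero.1 h
  · exact absurd (eq_neg_of_add_eq_zero_left h) h2

theorem orbWeight_star {B : SimpleGraph V} {A : Matrix V V ℂ} (hA : ThreeColored B A)
    {σ : Perm V} (hσ : σ ∈ realPerms B A) (v : V) :
    star (orbWeight A σ v) = orbWeight A σ v := by
  have h1 := orbWeight_mul_star hA (mem_realPerms.1 hσ).1 v
  apply mul_left_cancel₀ (left_ne_zero_of_mul_eq_one h1)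
  rw [h1, ← pow_two, orbWeight_sq hA hσ]

theorem exists_cycle_of_long {B : SimpleGraph V} {σ : Perm V} (h : ∀ v, B.Adj v (σ v)) {v : V}
    (hv : σ (σ v) ≠ v) : ∃ c : B.Walk v v, c.IsCycle ∧ c.support.toFinset = orb σ v ∧
      Traces c σ := by
  refine exists_walk_of_perm h (orb_isCycleOn σ v) ?_ (self_mem_orb σ v)
  have h1 : ({v, σ v, σ (σ v)} : Finset V) ⊆ orb σ v := by
    intro x hx
    simp only [mem_insert, mem_singleton] at hx
    rcases hx with rfl | rfl | rfl
    · exact self_mem_orb _ _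
    · exact apply_mem_orb.2 (self_mem_orb _ _)
    · exact apply_mem_orb.2 (apply_mem_orb.2 (self_mem_orb _ _))
  rw [← card_eq_three.2 ⟨v, σ v, σ (σ v), (h v).ne, hv.symm, (h (σ v)).ne, rfl⟩]
  exact card_le_card h1

/-- At most one cycle, up to the choice of a base point and a direction, has real weight. -/
def OneReal (B : SimpleGraph V) (A : Matrix V V ℂ) : Prop :=
  ∀ (u v : V) (c : B.Walk u u) (d : B.Walk v v), c.IsCycle → d.IsCycle →
    walkWeight A c ∉ ({Complex.I, -Complex.I} : Set ℂ) →
    walkWeight A d ∉ ({Complex.I, -Complex.I} : Set ℂ) → SameCycle c d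

theorem not_imag {z : ℂ} (h : z ^ 2 = 1) : z ∉ ({Complex.I, -Complex.I} : Set ℂ) := by
  simp only [Set.mem_insert_iff, Set.mem_singleton_iff]
  rintro (rfl | rfl) <;> norm_num at h

/-- The remaining permutations all have the same long orbit, traversed along the same cycle. -/
theorem realPerms_orb {B : SimpleGraph V} {A : Matrix V V ℂ} (hA : ThreeColored B A)
    (hexc : OneReal B A) {σ τ : Perm V} (hσ : σ ∈ realPerms B A) (hτ : τ ∈ realPerms B A) {v w : V}
    (hv : σ (σ v) ≠ v) (hw : τ (τ w) ≠ w) :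
    orb σ v = orb τ w ∧ ∀ u ∈ orb σ v, τ u = σ u ∨ u = σ (τ u) := by
  obtain ⟨c, hc, hcs, hct⟩ := exists_cycle_of_long (mem_realPerms.1 hσ).1 hv
  obtain ⟨d, hd, hds, hdt⟩ := exists_cycle_of_long (mem_realPerms.1 hτ).1 hw
  have hwc : walkWeight A c = orbWeight A σ v := by rw [hct.weight_eq, hcs, orbWeight]
  have hwd : walkWeight A d = orbWeight A τ w := by rw [hdt.weight_eq, hds, orbWeight]
  have hsame := hexc v w c d hc hd (by rw [hwc]; exact not_imag (orbWeight_sq hA hσ v))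
    (by rw [hwd]; exact not_imag (orbWeight_sq hA hτ w))
  have he : ∀ e, e ∈ c.edges ↔ e ∈ d.edges := fun e => by
    rw [← List.mem_toFinset, ← List.mem_toFinset (l := d.edges)]
    unfold SameCycle at hsame
    rw [hsame]
  have hsup : ∀ u, u ∈ c.support ↔ u ∈ d.support := by
    intro u
    constructor
    · intro hu
      exact d.fst_mem_support_of_mem_edges ((he _).1 (hct.mem_edges.2 ⟨hu, Or.inl rfl⟩))
    · intro hu
      exact c.fst_mem_support_of_mem_edges ((he _).2 (hdt.mem_edges.2 ⟨hu, Or.inl rfl⟩))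
  constructor
  · rw [← hcs, ← hds]
    ext u
    rw [List.mem_toFinset, List.mem_toFinset, hsup]
  · intro u hu
    rw [← hcs, List.mem_toFinset] at hu
    have := (he s(u, τ u)).2 (hdt.mem_edges.2 ⟨(hsup u).1 hu, Or.inl rfl⟩)
    exact (hct.mem_edges.1 this).2

theorem long_on_orb {σ : Perm V} {v u : V} (hv : σ (σ v) ≠ v) (hu : u ∈ orb σ v) :
    σ (σ u) ≠ u := by
  intro h
  apply hv
  obtain ⟨n, -, hn⟩ := (mem_orb.1 hu).symm.exists_pow_eq'
  rw [← hn, ← Perm.mul_apply, ← Perm.mul_apply, ← pow_two, ← pow_add, add_comm, pow_add,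
    Perm.mul_apply, pow_two, Perm.mul_apply, h]

theorem realPerms_off {B : SimpleGraph V} {A : Matrix V V ℂ} (hA : ThreeColored B A)
    (hexc : OneReal B A) {σ : Perm V} (hσ : σ ∈ realPerms B A) {v : V}
    (hv : σ (σ v) ≠ v) (u : V) (hu : u ∉ orb σ v) : σ (σ u) = u := by
  by_contra h
  rw [(realPerms_orb hA hexc hσ hσ hv h).1] at hu
  exact hu (self_mem_orb _ _)

/-- Two remaining permutations that agree at one vertex of the long orbit agree on all of it. -/
theorem realPerms_agree {B : SimpleGraph V} {A : Matrix V V ℂ} (hA : ThreeColored B A)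
    (hexc : OneReal B A) {σ τ : Perm V} (hσ : σ ∈ realPerms B A) (hτ : τ ∈ realPerms B A) {v : V}
    (hv : σ (σ v) ≠ v) (he : τ v = σ v) (u : V) (hu : u ∈ orb σ v) : τ u = σ u := by
  obtain ⟨w, hw⟩ := (mem_realPerms.1 hτ).2.2
  obtain ⟨hS, hor⟩ := realPerms_orb hA hexc hσ hτ hv hw
  obtain ⟨n, -, hn⟩ := (mem_orb.1 hu).exists_pow_eq'
  rw [← hn]
  clear hn
  induction n with
  | zero => exact he
  | succ n ih =>
    rw [pow_succ', Perm.mul_apply]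
    set x := (σ ^ n) v with hx
    have hxm : x ∈ orb σ v := mem_orb.2 ⟨n, by rw [zpow_natCast]⟩
    rcases hor (σ x) (apply_mem_orb.2 hxm) with h | h
    · exact h
    · exfalso
      have h1 : τ (σ x) = x := (σ.injective h).symm
      rw [← ih] at h1
      exact long_on_orb hw (hS ▸ hxm) h1

/-- The long orbit has the same weight for all remaining permutations: reversing it conjugates the
weight, which is real. -/
theorem orbWeight_eq {B : SimpleGraph V} {A : Matrix V V ℂ} (hA : ThreeColored B A)
    (hexc : OneReal B A) {σ τ : Perm V} (hσ : σ ∈ realPerms B A) (hτ : τ ∈ realPerms B A) {v w : V}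
    (hv : σ (σ v) ≠ v) (hw : τ (τ w) ≠ w) : orbWeight A τ w = orbWeight A σ v := by
  obtain ⟨hS, hor⟩ := realPerms_orb hA hexc hσ hτ hv hw
  by_cases h : ∃ x ∈ orb σ v, τ x = σ x
  · obtain ⟨x, hx, he⟩ := h
    have hlx := long_on_orb hv hx
    have hSx := (realPerms_orb hA hexc hσ hσ hv hlx).1
    rw [orbWeight, orbWeight, ← hS]
    refine prod_congr rfl fun u hu => ?_
    rw [realPerms_agree hA hexc hσ hτ hlx he u (hSx ▸ hu)]
  · push Not at h
    rw [← orbWeight_star hA hσ, ← prod_orb_symm hA, orbWeight, ← hS]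
    refine prod_congr rfl fun u hu => ?_
    rw [(symm_apply_eq σ).2 ((hor u hu).resolve_left (h u hu))]

theorem detTerm_real {B : SimpleGraph V} {A : Matrix V V ℂ} (hA : ThreeColored B A)
    (hexc : OneReal B A) {σ : Perm V} (hσ : σ ∈ realPerms B A) {v : V} (hv : σ (σ v) ≠ v) :
    detTerm A σ = - (-1) ^ #(orb σ v) * (-1) ^ (#(orb σ v)ᶜ / 2) * orbWeight A σ v := by
  have hadj := (mem_realPerms.1 hσ).1
  have hoff := realPerms_off hA hexc hσ hv
  rw [detTerm, sign_long hadj hoff, ← prod_mul_prod_compl (orb σ v) (fun u => A u (σ u)),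
    prod_pairs hA hadj (S := (orb σ v)ᶜ) (fun u hu => by rwa [mem_compl, apply_mem_orb, ← mem_compl])
      (fun u hu => hoff u (mem_compl.1 hu)), mul_one, orbWeight]
  push_cast
  ring

theorem detTerm_eq {B : SimpleGraph V} {A : Matrix V V ℂ} (hA : ThreeColored B A)
    (hexc : OneReal B A) {σ τ : Perm V} (hσ : σ ∈ realPerms B A) (hτ : τ ∈ realPerms B A) :
    detTerm A τ = detTerm A σ := by
  obtain ⟨v, hv⟩ := (mem_realPerms.1 hσ).2.2
  obtain ⟨w, hw⟩ := (mem_realPerms.1 hτ).2.2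
  rw [detTerm_real hA hexc hσ hv, detTerm_real hA hexc hτ hw, orbWeight_eq hA hexc hσ hτ hv hw,
    (realPerms_orb hA hexc hσ hτ hv hw).1]

theorem even_realPerms {B : SimpleGraph V} {A : Matrix V V ℂ} (hA : ThreeColored B A) :
    Even (#(realPerms B A)) := by
  refine even_card_of_fpf (fun σ => σ⁻¹) (fun σ hσ => ?_) (fun σ _ => inv_inv σ) (fun σ hσ h => ?_)
  · obtain ⟨hadj, him, v, hv⟩ := mem_realPerms.1 hσ
    refine mem_realPerms.2 ⟨fun u => ?_, ?_, v, fun h => hv ?_⟩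
    · have := hadj (σ⁻¹ u)
      rw [Perm.coe_inv, apply_symm_apply] at this
      exact this.symm
    · rw [eq_empty_iff_forall_notMem] at him ⊢
      intro u hu
      apply him u
      rw [mem_imagVerts] at hu ⊢
      have horb : orb σ⁻¹ u = orb σ u := by
        ext x; rw [mem_orb, mem_orb, Perm.sameCycle_inv]
      have : orbWeight A σ⁻¹ u = star (orbWeight A σ u) := by
        rw [← prod_orb_symm hA, orbWeight, horb]; rfl
      rw [this, star_sq_eq] at hu
      exact hu
    · rw [Perm.inv_eq_iff_eq, Perm.inv_eq_iff_eq] at h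
      exact h.symm
  · obtain ⟨-, -, v, hv⟩ := mem_realPerms.1 hσ
    apply hv
    have := Equiv.congr_fun h (σ v)
    rw [Perm.coe_inv, symm_apply_apply] at this
    exact this.symm

/-- Two-colouring the common long orbit and keeping every other edge of it turns the remaining
permutations injectively into perfect matchings. -/
theorem card_realPerms_le {B : SimpleGraph V} {A : Matrix V V ℂ} (hA : ThreeColored B A)
    (hexc : OneReal B A) (hn : Even (Fintype.card V)) : #(realPerms B A) ≤ #(mates B) := by
  classical
  rcases (realPerms B A).eq_empty_or_nonempty with h | ⟨σ, hσ⟩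
  · simp [h]
  obtain ⟨hadj, -, v, hv⟩ := mem_realPerms.1 hσ
  obtain ⟨f, hf⟩ := exists_coloring (orb_isCycleOn σ v) (even_card_on hadj (fun u => apply_mem_orb)
    (realPerms_off hA hexc hσ hv) hn)
  have hex : ∀ τ ∈ realPerms B A, ∃ α : Perm V, IsMate B α ∧
      ∀ u, α u = if u ∈ orb σ v ∧ f u = false then τ.symm u else τ u := by
    intro τ hτ
    obtain ⟨hadj', -, w, hw⟩ := mem_realPerms.1 hτ
    obtain ⟨hS, hor⟩ := realPerms_orb hA hexc hσ hτ hv hw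
    have hcl : ∀ u, τ u ∈ orb σ v ↔ u ∈ orb σ v := fun u => by rw [hS]; exact apply_mem_orb
    refine exists_half hadj' hcl (fun u hu => realPerms_off hA hexc hτ hw u (hS ▸ hu))
      fun u hu => ?_
    rcases hor u hu with h | h
    · rw [h]; exact hf u hu
    · have := hf (τ u) ((hcl u).2 hu)
      rw [← h] at this
      simp [this]
  choose! α hα hα' using hex
  refine card_le_card_of_injOn α (fun τ hτ => mem_mates.2 (hα τ hτ)) ?_
  intro τ hτ ρ hρ he
  rw [mem_coe] at hτ hρ
  have hval : ∀ u, ¬ (u ∈ orb σ v ∧ f u = false) → τ u = ρ u := by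
    intro u hu
    have h1 := hα' τ hτ u
    have h2 := hα' ρ hρ u
    rw [if_neg hu] at h1 h2
    rw [← h1, ← h2, he]
  obtain ⟨x, hx, hfx⟩ : ∃ x ∈ orb σ v, f x = true := by
    cases hfv : f v
    · exact ⟨σ v, apply_mem_orb.2 (self_mem_orb _ _), by rw [hf v (self_mem_orb _ _), hfv]; rfl⟩
    · exact ⟨v, self_mem_orb _ _, hfv⟩
  obtain ⟨w, hw⟩ := (mem_realPerms.1 hτ).2.2
  have hS := (realPerms_orb hA hexc hσ hτ hv hw).1
  have hlx := long_on_orb hw (hS ▸ hx)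
  have hSx := (realPerms_orb hA hexc hσ hτ hv hlx).1
  ext u
  by_cases hu : u ∈ orb σ v
  · exact (realPerms_agree hA hexc hτ hρ hlx (hval x (by simp [hfx])).symm u (hSx ▸ hu)).symm
  · exact hval u (fun h => hu h.1)

/-- The contribution of the remaining permutations relative to that of the perfect matchings. -/
theorem detTerm_real_even {B : SimpleGraph V} {A : Matrix V V ℂ} (hA : ThreeColored B A)
    (hexc : OneReal B A) (hn : Even (Fintype.card V)) {σ : Perm V} (hσ : σ ∈ realPerms B A) {v : V}
    (hv : σ (σ v) ≠ v) : detTerm A σ =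
      - (-1) ^ (Fintype.card V / 2) * (orbWeight A σ v * (-1) ^ (#(orb σ v) / 2)) := by
  have he := even_card_on (mem_realPerms.1 hσ).1 (fun u => apply_mem_orb)
    (realPerms_off hA hexc hσ hv) hn
  have hc := card_add_card_compl (orb σ v)
  rw [detTerm_real hA hexc hσ hv, he.neg_one_pow]
  have h1 : Fintype.card V / 2 = #(orb σ v)ᶜ / 2 + #(orb σ v) / 2 := by
    rw [← hc]; obtain ⟨l, hl⟩ := he; omega
  have h2 : ((-1 : ℂ) ^ (#(orb σ v) / 2)) * (-1) ^ (#(orb σ v) / 2) = 1 := by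
    rw [← mul_pow]; simp
  rw [h1, pow_add]
  linear_combination ((-1) ^ (#(orb σ v)ᶜ / 2) * orbWeight A σ v) * h2

theorem det_eq_of_real {B : SimpleGraph V} {A : Matrix V V ℂ} (hA : ThreeColored B A)
    (hexc : OneReal B A) {σ : Perm V} (hσ : σ ∈ realPerms B A) :
    A.det = (-1) ^ (Fintype.card V / 2) * #(mates B) + #(realPerms B A) * detTerm A σ := by
  rw [det_eq_mates_add hA, sum_congr rfl (fun τ hτ => detTerm_eq hA hexc hσ hτ), sum_const,
    nsmul_eq_mul]

/-- An independent cycle of real weight produces a remaining permutation. -/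
theorem exists_real_of_indep {B : SimpleGraph V} {A : Matrix V V ℂ} (hA : ThreeColored B A)
    {v : V} {c : B.Walk v v} (hc : c.IsCycle) (hi : IsIndep B c) (hw : walkWeight A c ^ 2 = 1) :
    ∃ σ ∈ realPerms B A, σ (σ v) ≠ v ∧ orbWeight A σ v = walkWeight A c ∧
      #(orb σ v) = c.length := by
  obtain ⟨σ, hadj, htr, hoff⟩ := exists_indep_perm hc hi
  have hvS : v ∈ c.support.toFinset := by simp
  have horb : ∀ x ∈ c.support.toFinset, orb σ x = c.support.toFinset := by
    intro x hx
    ext u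
    rw [mem_orb]
    constructor
    · intro h
      obtain ⟨n, -, hn⟩ := h.exists_pow_eq'
      rw [← hn]
      clear hn h
      induction n with
      | zero => exact hx
      | succ n ih =>
        rw [pow_succ', Perm.mul_apply]
        exact mem_coe.1 (htr.cycleOn.apply_mem_iff.2 (mem_coe.2 ih))
    · intro hu
      exact htr.cycleOn.2 (mem_coe.2 hx) (mem_coe.2 hu)
  have hwt : ∀ x ∈ c.support.toFinset, orbWeight A σ x = walkWeight A c := fun x hx => by
    rw [orbWeight, horb x hx, htr.weight_eq]
  have hlong := long_of_card htr.cycleOn htr.three_le hvS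
  refine ⟨σ, mem_realPerms.2 ⟨hadj, ?_, v, hlong⟩, hlong, hwt v hvS, ?_⟩
  · rw [eq_empty_iff_forall_notMem]
    intro x hx
    rw [mem_imagVerts] at hx
    have hx1 : orbWeight A σ x ^ 2 = 1 := by
      by_cases hxs : x ∈ c.support.toFinset
      · rw [hwt x hxs, hw]
      · rw [orbWeight, prod_pairs hA hadj (fun _ => apply_mem_orb.2), one_pow]
        intro u hu
        apply hoff
        intro hus
        have h1 := horb u (List.mem_toFinset.2 hus)
        apply hxs
        rw [← h1]
        exact mem_orb.2 (mem_orb.1 hu).symm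
    rw [hx1] at hx
    norm_num at hx
  · rw [horb v hvS, htr.card_eq]

end Terms

/-! ### Evaluation of the determinant -/

section Conclusion
open Finset Equiv

variable {V : Type*} [Fintype V] [DecidableEq V] {B : SimpleGraph V} {A : Matrix V V ℂ}

theorem detTerm_real_unit (hA : ThreeColored B A) (hexc : OneReal B A) {σ : Perm V}
    (hσ : σ ∈ realPerms B A) : detTerm A σ = 1 ∨ detTerm A σ = -1 := by
  obtain ⟨v, hv⟩ := (mem_realPerms.1 hσ).2.2
  rw [detTerm_real hA hexc hσ hv]
  rcases sq_eq_one_iff.1 (orbWeight_sq hA hσ v) with h | h <;>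
    rcases neg_one_pow_eq_or ℂ (#(orb σ v)) with h1 | h1 <;>
    rcases neg_one_pow_eq_or ℂ (#(orb σ v)ᶜ / 2) with h2 | h2 <;> simp [h, h1, h2]

/-- Modulo two the determinant counts the perfect matchings. -/
theorem odd_mates (hA : ThreeColored B A) (hexc : OneReal B A) (hd : A.det = 1 ∨ A.det = -1) :
    Odd (#(mates B)) := by
  obtain ⟨t, ht⟩ : ∃ t : ℤ, A.det = (-1) ^ (Fintype.card V / 2) * #(mates B) +
      #(realPerms B A) * t := by
    rcases (realPerms B A).eq_empty_or_nonempty with h | ⟨σ, hσ⟩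
    · exact ⟨0, by rw [det_eq_mates_add hA, h]; simp⟩
    · rcases detTerm_real_unit hA hexc hσ with h | h
      · exact ⟨1, by rw [det_eq_of_real hA hexc hσ, h]; simp⟩
      · exact ⟨-1, by rw [det_eq_of_real hA hexc hσ, h]; simp⟩
  obtain ⟨r, hr⟩ := even_realPerms (B := B) hA
  have key : ((-1 : ℤ) ^ (Fintype.card V / 2) * #(mates B) + #(realPerms B A) * t = 1) ∨
      ((-1 : ℤ) ^ (Fintype.card V / 2) * #(mates B) + #(realPerms B A) * t = -1) := by
    rcases hd with h | h
    · left; rw [h] at ht; exact_mod_cast ht.symm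
    · right; rw [h] at ht; exact_mod_cast ht.symm
  by_contra hodd
  rw [Nat.not_odd_iff_even] at hodd
  obtain ⟨m, hm⟩ := hodd
  have hev : Even ((-1 : ℤ) ^ (Fintype.card V / 2) * #(mates B) + #(realPerms B A) * t) := by
    refine ⟨(-1 : ℤ) ^ (Fintype.card V / 2) * m + r * t, ?_⟩
    rw [hm, hr]; push_cast; ring
  rcases key with h | h <;> rw [h] at hev <;> revert hev <;> decide

end Conclusion

/-- Characterization of unimodular connected bicyclic 3-colored
digraphs in which every cycle with at most one exception has weight `±i`. -/
theorem stmt17 {V : Type*} [Fintype V] [DecidableEq V] (B : SimpleGraph V)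
    (A : Matrix V V ℂ) (hA : ThreeColored B A) (hB : Bicyclic V B)
    (hexc : ∀ (u v : V) (c : B.Walk u u) (d : B.Walk v v), c.IsCycle → d.IsCycle →
      walkWeight A c ∉ ({Complex.I, -Complex.I} : Set ℂ) →
      walkWeight A d ∉ ({Complex.I, -Complex.I} : Set ℂ) → SameCycle c d) :
    A.det ∈ ({1, -1} : Set ℂ) ↔
      ((∃! M, IsPM B M) ∨
       (ThetaType B ∧ HasPM B ∧
        (∀ (u : V) (c : B.Walk u u), c.IsCycle → IsIndep B c) ∧
        ∃ (u : V) (Γ : B.Walk u u), Γ.IsCycle ∧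
          walkWeight A Γ * (-1) ^ (Γ.length / 2) = 1)) := by
  have hexc' : OneReal B A := hexc
  simp only [Set.mem_insert_iff, Set.mem_singleton_iff]
  have hε : ((-1 : ℂ) ^ (Fintype.card V / 2) = 1) ∨ ((-1 : ℂ) ^ (Fintype.card V / 2) = -1) :=
    neg_one_pow_eq_or ℂ _
  rw [existsUnique_iff]
  constructor
  · intro hd
    have hodd := odd_mates hA hexc' hd
    have hle := card_mates_le hB
    have hcase : (mates B).card = 1 ∨ (mates B).card = 3 := by
      obtain ⟨k, hk⟩ := hodd; omega
    refine hcase.imp id fun h3 => ⟨theta_of_three h3, (hasPM_iff B).2 (by omega),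
      fun u c hc => indep_of_three hB h3 hc, ?_⟩
    have hn : Even (Fintype.card V) := by
      obtain ⟨α, hα⟩ := Finset.card_pos.1 (show 0 < (mates B).card by omega)
      exact (mem_mates.1 hα).even_card
    rcases (realPerms B A).eq_empty_or_nonempty with hR | ⟨σ, hσ⟩
    · exfalso
      rw [det_eq_mates_add hA, hR, h3] at hd
      rcases hε with h | h <;> rw [h] at hd <;> norm_num at hd
    · obtain ⟨hadj, -, v, hv⟩ := mem_realPerms.1 hσ
      obtain ⟨c, hc, hcs, htr⟩ := exists_cycle_of_long hadj hv
      refine ⟨v, c, hc, ?_⟩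
      rw [htr.weight_eq, ← htr.card_eq, hcs, ← orbWeight]
      have hdet := det_eq_of_real hA hexc' hσ
      rw [detTerm_real_even hA hexc' hn hσ hv, h3] at hdet
      rcases sq_eq_one_iff.1 (orbWeight_sq hA hσ v) with hw | hw <;>
        rcases neg_one_pow_eq_or ℂ ((orb σ v).card / 2) with hl | hl <;>
        rw [hw, hl] at hdet ⊢ <;> norm_num
      -- the opposite sign would give a determinant of absolute value `3 + #(realPerms B A)`
      all_goals
        exfalso
        have hpos : ((3 + (realPerms B A).card : ℕ) : ℂ) = 1 ∨
            ((3 + (realPerms B A).card : ℕ) : ℂ) = ((-1 : ℤ) : ℂ) := by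
          push_cast
          rcases hε with h | h <;> rw [h] at hdet <;> rcases hd with hd | hd <;>
            rw [hd] at hdet
          · left; linear_combination -hdet
          · right; linear_combination -hdet
          · right; linear_combination hdet
          · left; linear_combination hdet
        rcases hpos with h | h
        · have : 3 + (realPerms B A).card = 1 := by exact_mod_cast h
          omega
        · have : ((3 + (realPerms B A).card : ℕ) : ℤ) = -1 := by exact_mod_cast h
          omega
  · rintro (h1 | ⟨ht, hp, hi, u, Γ, hΓ, hw⟩)
    · have hn : Even (Fintype.card V) := by
        obtain ⟨α, hα⟩ := Finset.card_pos.1 (show 0 < (mates B).card by omega)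
        exact (mem_mates.1 hα).even_card
      have hR : realPerms B A = ∅ := by
        have h2 := card_realPerms_le hA hexc' hn
        obtain ⟨r, hr⟩ := even_realPerms (B := B) hA
        rw [← Finset.card_eq_zero]
        omega
      rw [det_eq_mates_add hA, hR, h1]
      simpa using hε
    · have h3 := three_of_theta hB ht hp hi
      have hn : Even (Fintype.card V) := by
        obtain ⟨α, hα⟩ := Finset.card_pos.1 (show 0 < (mates B).card by omega)
        exact (mem_mates.1 hα).even_card
      have hw2 : walkWeight A Γ ^ 2 = 1 := by
        rcases neg_one_pow_eq_or ℂ (Γ.length / 2) with hl | hl <;> rw [hl] at hw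
        · linear_combination (walkWeight A Γ + 1) * hw
        · linear_combination (-walkWeight A Γ + 1) * hw
      obtain ⟨σ, hσ, hv, hσw, hσc⟩ := exists_real_of_indep hA hΓ (hi u Γ hΓ) hw2
      have hR : (realPerms B A).card = 2 := by
        have h2 := card_realPerms_le hA hexc' hn
        have h4 := Finset.card_pos.2 ⟨σ, hσ⟩
        obtain ⟨r, hr⟩ := even_realPerms (B := B) hA
        omega
      rw [det_eq_of_real hA hexc' hσ, detTerm_real_even hA hexc' hn hσ hv, hσw, hσc, hw, h3, hR]
      rcases hε with h | h <;> rw [h] <;> norm_num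
end
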